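/- Let n ≥ 2 and let P be a polytope realizing the type D_n model. Then there exists a finite sequence of polytopes P_0, P_1, …, P_m in ℝ^n such that P_0 = [0,1]^n, for each i the polytope P_{i+1} is obtained from P_i by shaving off a face of codimension 2 (i.e., there exist a face G_i of P_i with dim G_i = dim P_i − 2 and a closed halfspace H_i ⊂ ℝ^n with G_i ∩ H_i = ∅, every vertex of P_i not contained in G_i lying in the interior of H_i, and P_{i+1} = P_i ∩ H_i), and P_m is combinatorially equivalent to P. (Generalized associahedra of type D_n lie in the class P^cube.) -/

import Mathlib

open Pointwise

namespace GalD

/-- A polytope in `ℝ^d`: the convex hull of a finite set of points. -/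
def IsPolytope {d : ℕ} (P : Set (Fin d → ℝ)) : Prop :=
  ∃ V : Finset (Fin d → ℝ), P = convexHull ℝ (V : Set (Fin d → ℝ))

/-- A face of `P`: a nonempty exposed face of `P` (`P` itself included). -/
def IsFaceOf {d : ℕ} (F P : Set (Fin d → ℝ)) : Prop :=
  F.Nonempty ∧ IsExposed ℝ P F

/-- The dimension of a set: the rank of the direction of its affine span. -/
noncomputable def polyDim {d : ℕ} (P : Set (Fin d → ℝ)) : ℕ :=
  Module.finrank ℝ (affineSpan ℝ P).direction

/-- A facet: a face of dimension `dim P - 1`. -/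
def IsFacetOf {d : ℕ} (F P : Set (Fin d → ℝ)) : Prop :=
  IsFaceOf F P ∧ polyDim F + 1 = polyDim P

/-- A vertex: a point spanning a face of dimension 0. -/
def IsVertexOf {d : ℕ} (v : Fin d → ℝ) (P : Set (Fin d → ℝ)) : Prop :=
  IsFaceOf {v} P

/-- A simple polytope: every vertex is contained in exactly `dim P` facets. -/
def IsSimplePolytope {d : ℕ} (P : Set (Fin d → ℝ)) : Prop :=
  IsPolytope P ∧ ∀ v, IsVertexOf v P →
    {F : Set (Fin d → ℝ) | IsFacetOf F P ∧ v ∈ F}.ncard = polyDim P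

/-- A flag polytope: simple, and every collection of pairwise intersecting facets
has a nonempty common intersection. -/
def IsFlagPolytope {d : ℕ} (P : Set (Fin d → ℝ)) : Prop :=
  IsSimplePolytope P ∧
  ∀ 𝒮 : Set (Set (Fin d → ℝ)), 𝒮.Nonempty → (∀ F ∈ 𝒮, IsFacetOf F P) →
    (∀ F ∈ 𝒮, ∀ G ∈ 𝒮, (F ∩ G).Nonempty) → (⋂₀ 𝒮).Nonempty

/-- Combinatorial equivalence: an order isomorphism between the face posets. -/
def CombEquiv {d₁ d₂ : ℕ} (P : Set (Fin d₁ → ℝ)) (Q : Set (Fin d₂ → ℝ)) : Prop :=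
  Nonempty ({F : Set (Fin d₁ → ℝ) // IsFaceOf F P} ≃o
            {G : Set (Fin d₂ → ℝ) // IsFaceOf G Q})

/-- The product of a set in `ℝ^{d₁}` and a set in `ℝ^{d₂}`, inside `ℝ^{d₁+d₂}`. -/
def polyProd {d₁ d₂ : ℕ} (Q : Set (Fin d₁ → ℝ)) (R : Set (Fin d₂ → ℝ)) :
    Set (Fin (d₁ + d₂) → ℝ) :=
  {x | (fun i => x (Fin.castAdd d₂ i)) ∈ Q ∧ (fun j => x (Fin.natAdd d₁ j)) ∈ R}

/-- `P` is not combinatorially equivalent to a nontrivial product of two polytopes. -/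
def Indecomposable {d : ℕ} (P : Set (Fin d → ℝ)) : Prop :=
  ¬ ∃ (d₁ d₂ : ℕ) (Q : Set (Fin d₁ → ℝ)) (R : Set (Fin d₂ → ℝ)),
    IsPolytope Q ∧ IsPolytope R ∧ 1 ≤ polyDim Q ∧ 1 ≤ polyDim R ∧
    CombEquiv P (polyProd Q R)

/-- A building set on the ground set `V`. -/
structure IsBuildingSetOn {m : ℕ} (V : Finset (Fin m)) (B : Finset (Finset (Fin m))) :
    Prop where
  subset_ground : ∀ S ∈ B, S ⊆ V
  nonempty_mem : ∀ S ∈ B, S.Nonempty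
  singleton_mem : ∀ i ∈ V, ({i} : Finset (Fin m)) ∈ B
  ground_mem : V ∈ B
  union_mem : ∀ S₁ ∈ B, ∀ S₂ ∈ B, (S₁ ∩ S₂).Nonempty → S₁ ∪ S₂ ∈ B

/-- A connected building set on `[m]`. -/
def IsConnectedBuildingSet (m : ℕ) (B : Finset (Finset (Fin m))) : Prop :=
  IsBuildingSetOn (Finset.univ : Finset (Fin m)) B

/-- The nestohedron `P_B`: the Minkowski sum of the simplices `Δ_S`, `S ∈ B`. -/
noncomputable def nestohedron (m : ℕ) (B : Finset (Finset (Fin m))) :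
    Set (Fin m → ℝ) :=
  ∑ S ∈ B, convexHull ℝ ((fun i => (Pi.single i 1 : Fin m → ℝ)) '' (S : Set (Fin m)))

/-- A diagonal of a convex `N`-gon with vertices labelled by `ZMod N`. -/
def IsDiag (N : ℕ) (e : Finset (ZMod N)) : Prop :=
  ∃ a b : ZMod N, e = {a, b} ∧ b ≠ a ∧ b ≠ a + 1 ∧ b ≠ a - 1

/-- `c` lies strictly between `a` and `b` on the arc from `a` to `b` (counterclockwise). -/
def StrictBtw (N : ℕ) (a c b : ZMod N) : Prop :=
  0 < (c - a).val ∧ (c - a).val < (b - a).val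

/-- Two diagonals cross: their endpoints alternate around the circle. -/
def Crosses (N : ℕ) (e f : Finset (ZMod N)) : Prop :=
  ∃ a b c d : ZMod N, e = {a, b} ∧ f = {c, d} ∧
    StrictBtw N a c b ∧ StrictBtw N b d a

/-- Image of a diagonal under the central symmetry `a ↦ a + n` of the `2n`-gon. -/
def centralSym (n : ℕ) (e : Finset (ZMod (2 * n))) : Finset (ZMod (2 * n)) :=
  e.image (· + (n : ZMod (2 * n)))

/-- A diameter of the `2n`-gon: a diagonal `{a, a + n}`. -/
def IsDiameter (n : ℕ) (e : Finset (ZMod (2 * n))) : Prop :=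
  ∃ a : ZMod (2 * n), e = {a, a + (n : ZMod (2 * n))}

/-- Raw elements of the type `D_n` model: symmetric pairs of diagonals,
red diameters and blue diameters. -/
inductive DElem (n : ℕ) where
  | pair : Finset (Finset (ZMod (2 * n))) → DElem n
  | red  : Finset (ZMod (2 * n)) → DElem n
  | blue : Finset (ZMod (2 * n)) → DElem n

/-- Membership in the set `M_n` of the type `D_n` model. -/
def memM (n : ℕ) : DElem n → Prop
  | .pair s => ∃ e, IsDiag (2 * n) e ∧ ¬ IsDiameter n e ∧ s = {e, centralSym n e}
  | .red e => IsDiag (2 * n) e ∧ IsDiameter n e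
  | .blue e => IsDiag (2 * n) e ∧ IsDiameter n e

/-- Compatibility of elements of the type `D_n` model. -/
def DCompat (n : ℕ) : DElem n → DElem n → Prop
  | .pair s, .pair t => ∀ e ∈ s, ∀ f ∈ t, ¬ Crosses (2 * n) e f
  | .pair s, .red e => ∀ f ∈ s, ¬ Crosses (2 * n) e f
  | .pair s, .blue e => ∀ f ∈ s, ¬ Crosses (2 * n) e f
  | .red e, .pair s => ∀ f ∈ s, ¬ Crosses (2 * n) e f
  | .blue e, .pair s => ∀ f ∈ s, ¬ Crosses (2 * n) e f
  | .red _, .red _ => True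
  | .blue _, .blue _ => True
  | .red e, .blue f => e = f
  | .blue e, .red f => e = f

/-- The set `M_n` of the type `D_n` model, as a type. -/
def MSet (n : ℕ) := {x : DElem n // memM n x}

/-- `P` realizes the type `D_n` model via the bijection `φ`. -/
def RealizesDWith (n : ℕ) {d : ℕ} (P : Set (Fin d → ℝ))
    (φ : MSet n → Set (Fin d → ℝ)) : Prop :=
  IsPolytope P ∧ IsFlagPolytope P ∧ polyDim P = n ∧
  (∀ x, IsFacetOf (φ x) P) ∧ Function.Injective φ ∧
  (∀ F, IsFacetOf F P → ∃ x, φ x = F) ∧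
  ∀ x y : MSet n, x ≠ y → ((φ x ∩ φ y).Nonempty ↔ DCompat n x.1 y.1)

/-- `P` realizes the type `D_n` model. -/
def RealizesD (n : ℕ) {d : ℕ} (P : Set (Fin d → ℝ)) : Prop :=
  ∃ φ, RealizesDWith n P φ

/-- Elements of the type `A_k` model: diagonals of a convex `(k+3)`-gon. -/
def ASet (k : ℕ) := {e : Finset (ZMod (k + 3)) // IsDiag (k + 3) e}

/-- `P` realizes the type `A_k` model via the bijection `φ`. -/
def RealizesAWith (k : ℕ) {d : ℕ} (P : Set (Fin d → ℝ))
    (φ : ASet k → Set (Fin d → ℝ)) : Prop :=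
  IsPolytope P ∧ IsFlagPolytope P ∧ polyDim P = k ∧
  (∀ x, IsFacetOf (φ x) P) ∧ Function.Injective φ ∧
  (∀ F, IsFacetOf F P → ∃ x, φ x = F) ∧
  ∀ x y : ASet k, x ≠ y → ((φ x ∩ φ y).Nonempty ↔ ¬ Crosses (k + 3) x.1 y.1)

/-- `P` realizes the type `A_k` model. -/
def RealizesA (k : ℕ) {d : ℕ} (P : Set (Fin d → ℝ)) : Prop :=
  ∃ φ, RealizesAWith k P φ

/-- A closed halfspace in `ℝ^d`. -/
def IsClosedHalfspace {d : ℕ} (H : Set (Fin d → ℝ)) : Prop :=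
  ∃ (l : (Fin d → ℝ) →ₗ[ℝ] ℝ) (c : ℝ), l ≠ 0 ∧ H = {x | l x ≤ c}

/-- `P'` is obtained from `P` by shaving off a face of codimension 2. -/
def ObtainedByShaving {d : ℕ} (P P' : Set (Fin d → ℝ)) : Prop :=
  ∃ G H : Set (Fin d → ℝ), IsFaceOf G P ∧ polyDim G + 2 = polyDim P ∧
    IsClosedHalfspace H ∧ G ∩ H = ∅ ∧
    (∀ v, IsVertexOf v P → v ∉ G → v ∈ interior H) ∧ P' = P ∩ H

/-- The restriction `B|_S` of a building set. -/
def restrictBS {m : ℕ} (B : Finset (Finset (Fin m))) (S : Finset (Fin m)) :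
    Finset (Finset (Fin m)) :=
  B.filter (· ⊆ S)

/-- The contraction `B / S` of a building set. -/
def contractBS {m : ℕ} (B : Finset (Finset (Fin m))) (S : Finset (Fin m)) :
    Finset (Finset (Fin m)) :=
  (B.filter (fun S'' => ¬ S'' ⊆ S)).image (fun S'' => S'' \ S)

/-- The subset of the nestohedron `P_B` on which `x ↦ ∑_{i ∈ S} x i` is minimized. -/
def minFace (m : ℕ) (B : Finset (Finset (Fin m))) (S : Finset (Fin m)) :
    Set (Fin m → ℝ) :=
  {x ∈ nestohedron m B | ∀ y ∈ nestohedron m B, ∑ i ∈ S, x i ≤ ∑ i ∈ S, y i}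

/-! The face lattice of a simple polytope is determined by the nerve of its facets, and for a flag
polytope the nerve is the clique complex of a graph on the facets. Shaving off the codimension two
face in which the facets `i` and `j` meet subdivides the edge `{i, j}` of the nerve, which stays a
clique complex: in the graph, the edge `{i, j}` is removed and a new vertex is joined to `i`, to `j`
and to their common neighbours.

Label the lower and upper facets of the cube by red and blue diameters of the `2n`-gon in such a way
that red `a` is opposite to blue `a + 1`. For every arc of length at least two of the `n`-cycle,
from `a` to `b`, shave off the intersection of red `a` and blue `b`, shorter arcs first. The new
facet stands for the centrally symmetric pair of diagonals spanned by the arc, and in the end two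
facets meet iff their labels are compatible in the type `D_n` model. -/

/-! ### Systems of affine inequalities -/

/-- A finite system of affine inequalities `0 ≤ ineq i x`, `i ∈ index`, on an affine subspace
`ambient`. Polytopes are handled through such descriptions; the index set is a `Finset` of a fixed
label type so that an inequality can be added without relabelling the others. -/
structure IneqSystem (E ι : Type*) [AddCommGroup E] [Module ℝ E] where
  ambient : AffineSubspace ℝ E
  index : Finset ι
  ineq : ι → E →ᵃ[ℝ] ℝ

namespace IneqSystem

section Module

variable {E ι : Type*} [AddCommGroup E] [Module ℝ E] {S : IneqSystem E ι} {τ σ : Finset ι}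
  {x y u : E}

/-- The solution set of a system of inequalities. -/
def polyhedron (S : IneqSystem E ι) : Set E :=
  {x | x ∈ S.ambient ∧ ∀ i ∈ S.index, 0 ≤ S.ineq i x}

/-- The part of the solution set on which the inequalities labelled by `τ` are tight. -/
def face (S : IneqSystem E ι) (τ : Finset ι) : Set E :=
  {x | x ∈ S.polyhedron ∧ ∀ i ∈ τ, S.ineq i x = 0}

open Classical in
/-- The labels of the inequalities that are tight at a point. -/
noncomputable def active (S : IneqSystem E ι) (x : E) : Finset ι :=
  {i ∈ S.index | S.ineq i x = 0}

/-- The nerve of the cover of the boundary by the sets `face {i}`: the sets of inequalities that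
are simultaneously tight at some solution. -/
def nerve (S : IneqSystem E ι) : Set (Finset ι) :=
  {τ | τ ⊆ S.index ∧ (S.face τ).Nonempty}

/-- A system is simple if at every solution the linear parts of the tight inequalities are linearly
independent on the direction of the ambient subspace; equivalently, they take arbitrary prescribed
values there. -/
def IsSimple (S : IneqSystem E ι) : Prop :=
  ∀ x ∈ S.polyhedron, ∀ t : ι → ℝ, ∃ u ∈ S.ambient.direction,
    ∀ i ∈ S.index, S.ineq i x = 0 → (S.ineq i).linear u = t i

theorem mem_active {i : ι} : i ∈ S.active x ↔ i ∈ S.index ∧ S.ineq i x = 0 := by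
  simp only [active, Finset.mem_filter]

theorem active_subset_index : S.active x ⊆ S.index := fun _ hi => (mem_active.1 hi).1

theorem mem_face_active (hx : x ∈ S.polyhedron) : x ∈ S.face (S.active x) :=
  ⟨hx, fun _ hi => (mem_active.1 hi).2⟩

theorem subset_active (hτ : τ ⊆ S.index) (hx : x ∈ S.face τ) : τ ⊆ S.active x :=
  fun i hi => mem_active.2 ⟨hτ hi, hx.2 i hi⟩

theorem face_subset_polyhedron : S.face τ ⊆ S.polyhedron := fun _ hx => hx.1

theorem face_empty : S.face ∅ = S.polyhedron :=
  Set.ext fun _ => ⟨fun h => h.1, fun h => ⟨h, fun _ hi => absurd hi (Finset.notMem_empty _)⟩⟩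

theorem face_anti (h : σ ⊆ τ) : S.face τ ⊆ S.face σ := fun _ hx => ⟨hx.1, fun i hi => hx.2 i (h hi)⟩

theorem affineMap_smul_vadd (f : E →ᵃ[ℝ] ℝ) (ε : ℝ) :
    f (ε • u +ᵥ x) = f x + ε * f.linear u := by
  rw [AffineMap.map_vadd, map_smul, vadd_eq_add, smul_eq_mul, add_comm]

theorem exists_pos_smul_vadd_mem (hx : x ∈ S.polyhedron) (hu : u ∈ S.ambient.direction)
    (hactive : ∀ i ∈ S.active x, 0 ≤ (S.ineq i).linear u) :
    ∃ ε > (0 : ℝ), ε • u +ᵥ x ∈ S.polyhedron ∧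
      ∀ i ∈ S.index, 0 < S.ineq i x → 0 < S.ineq i (ε • u +ᵥ x) := by
  have hev : ∀ᶠ ε in nhdsWithin (0 : ℝ) (Set.Ioi 0), ∀ i ∈ S.index,
      0 < S.ineq i x → 0 < S.ineq i (ε • u +ᵥ x) := by
    rw [Filter.eventually_all_finset]
    intro i _
    by_cases hpos : 0 < S.ineq i x
    · have hcont : Continuous fun ε : ℝ => S.ineq i x + ε * (S.ineq i).linear u := by fun_prop
      have hnear := (hcont.tendsto 0).eventually_const_lt (by simpa using hpos)
      filter_upwards [nhdsWithin_le_nhds hnear] with ε hε _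
      rwa [affineMap_smul_vadd]
    · exact Filter.Eventually.of_forall fun _ h => absurd h hpos
  obtain ⟨ε, hε, hε0⟩ := (hev.and self_mem_nhdsWithin).exists
  refine ⟨ε, hε0, ⟨AffineSubspace.vadd_mem_of_mem_direction
    (Submodule.smul_mem _ _ hu) hx.1, fun i hi => ?_⟩, hε⟩
  rcases (hx.2 i hi).lt_or_eq with hpos | hzero
  · exact (hε i hi hpos).le
  · rw [affineMap_smul_vadd, ← hzero, zero_add]
    exact mul_nonneg (le_of_lt hε0) (hactive i (mem_active.2 ⟨hi, hzero.symm⟩))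

theorem convex_polyhedron : Convex ℝ S.polyhedron := by
  have : S.polyhedron = (S.ambient : Set E) ∩ ⋂ i ∈ S.index, S.ineq i ⁻¹' Set.Ici 0 := by
    ext x
    simp only [polyhedron, Set.mem_ofPred_eq, Set.mem_inter_iff, SetLike.mem_coe, Set.mem_iInter,
      Set.mem_preimage, Set.mem_Ici]
  rw [this]
  exact S.ambient.convex.inter
    (convex_iInter₂ fun i _ => (convex_Ici 0).affine_preimage (S.ineq i))

theorem IsSimple.exists_mem_face_pos (hS : S.IsSimple) (hτ : τ ∈ S.nerve) :
    ∃ x ∈ S.face τ, ∀ i ∈ S.index, i ∉ τ → 0 < S.ineq i x := by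
  classical
  obtain ⟨hτI, x, hx, hxτ⟩ := hτ
  obtain ⟨u, hu, hui⟩ := hS x hx fun i => if i ∈ τ then 0 else 1
  obtain ⟨ε, hε, hmem, hpos⟩ := exists_pos_smul_vadd_mem hx hu fun i hi => by
    obtain ⟨hi, hxi⟩ := mem_active.1 hi
    rw [hui i hi hxi]
    split_ifs <;> norm_num
  refine ⟨_, ⟨hmem, fun i hi => ?_⟩, fun i hi hiτ => ?_⟩
  · rw [affineMap_smul_vadd, hxτ i hi, hui i (hτI hi) (hxτ i hi), if_pos hi]
    norm_num
  · rcases (hx.2 i hi).lt_or_eq with hlt | hzero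
    · exact hpos i hi hlt
    · rw [affineMap_smul_vadd, ← hzero, hui i hi hzero.symm, if_neg hiτ]
      linarith

theorem IsSimple.face_subset_face_iff (hS : S.IsSimple) (hτ : τ ∈ S.nerve) (hσ : σ ⊆ S.index) :
    S.face τ ⊆ S.face σ ↔ σ ⊆ τ := by
  refine ⟨fun hsub i hi => ?_, face_anti⟩
  obtain ⟨x, hx, hpos⟩ := hS.exists_mem_face_pos hτ
  by_contra hiτ
  exact (hpos i (hσ hi) hiτ).ne' ((hsub hx).2 i hi)

theorem isExtreme_face (hτ : τ ⊆ S.index) : IsExtreme ℝ S.polyhedron (S.face τ) := by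
  refine ⟨face_subset_polyhedron, ?_⟩
  rintro y hy z hz _ ⟨_, hzero⟩ ⟨a, b, ha, hb, hab, rfl⟩
  refine ⟨hy, fun i hi => ?_⟩
  have hyi := hy.2 i (hτ hi)
  have hzi := hz.2 i (hτ hi)
  have h := hzero i hi
  rw [Convex.combo_affine_apply hab, smul_eq_mul, smul_eq_mul] at h
  nlinarith [mul_nonneg ha.le hyi, mul_nonneg hb.le hzi]

/-- Minimality of the number of tight inequalities puts `p` in the relative interior of `F`. -/
theorem eq_face_active_of_isExtreme {F : Set E} {p : E} (hF : IsExtreme ℝ S.polyhedron F)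
    (hconv : Convex ℝ F) (hp : p ∈ F) (hmin : ∀ q ∈ F, (S.active p).card ≤ (S.active q).card) :
    F = S.face (S.active p) := by
  classical
  have hpS := hF.subset hp
  refine Set.Subset.antisymm (fun y hy => ⟨hF.subset hy, fun i hi => ?_⟩) fun y hy => ?_
  · have hmid : midpoint ℝ p y ∈ F := hconv.midpoint_mem hp hy
    have hsub : S.active (midpoint ℝ p y) ⊆ S.active p ∩ S.active y := fun i hi => by
      obtain ⟨hi, hzero⟩ := mem_active.1 hi
      rw [AffineMap.map_midpoint, midpoint_eq_smul_add, smul_eq_mul] at hzero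
      have hpi := hpS.2 i hi
      have hyi := (hF.subset hy).2 i hi
      exact Finset.mem_inter.2
        ⟨mem_active.2 ⟨hi, by linarith [(mul_eq_zero_iff_left (by norm_num)).1 hzero]⟩,
          mem_active.2 ⟨hi, by linarith [(mul_eq_zero_iff_left (by norm_num)).1 hzero]⟩⟩
    have hinter : S.active p ∩ S.active y = S.active p :=
      Finset.eq_of_subset_of_card_le Finset.inter_subset_left
        ((hmin _ hmid).trans (Finset.card_le_card hsub))
    rw [← hinter, Finset.mem_inter] at hi
    exact (mem_active.1 hi.2).2
  · obtain ⟨ε, hε, hmem, -⟩ := exists_pos_smul_vadd_mem (u := p - y) hpS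
      (AffineSubspace.vsub_mem_direction hpS.1 hy.1.1) fun i hi => by
        have := (S.ineq i).linearMap_vsub p y
        rw [vsub_eq_sub] at this
        rw [this, hy.2 i hi, (mem_active.1 hi).2, vsub_self]
    refine hF.left_mem_of_mem_openSegment hy.1 hmem hp ⟨ε / (1 + ε), 1 / (1 + ε), by positivity,
      by positivity, by field_simp; ring, ?_⟩
    rw [vadd_eq_add]
    match_scalars <;> field_simp <;> ring

theorem exists_eq_face_of_isExtreme {F : Set E} (hF : IsExtreme ℝ S.polyhedron F)
    (hconv : Convex ℝ F) (hne : F.Nonempty) : ∃ τ ∈ S.nerve, F = S.face τ := by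
  obtain ⟨p, hp, hmin⟩ := WellFounded.has_min (measure fun x => (S.active x).card).wf F hne
  exact ⟨S.active p, ⟨active_subset_index, p, mem_face_active (hF.subset hp)⟩,
    eq_face_active_of_isExtreme hF hconv hp fun q hq => not_lt.1 (hmin q hq)⟩

theorem IsSimple.mem_direction_affineSpan_face (hS : S.IsSimple) (hτ : τ ∈ S.nerve) :
    u ∈ (affineSpan ℝ (S.face τ)).direction ↔
      u ∈ S.ambient.direction ∧ ∀ i ∈ τ, (S.ineq i).linear u = 0 := by
  constructor
  · intro hu
    rw [direction_affineSpan, vectorSpan_def] at hu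
    induction hu using Submodule.span_induction with
    | mem v hv =>
      obtain ⟨y, hy, z, hz, rfl⟩ := hv
      refine ⟨AffineSubspace.vsub_mem_direction hy.1.1 hz.1.1, fun i hi => ?_⟩
      rw [AffineMap.linearMap_vsub, hy.2 i hi, hz.2 i hi, vsub_self]
    | zero => exact ⟨zero_mem _, fun i _ => map_zero _⟩
    | add v w _ _ hv hw =>
      exact ⟨add_mem hv.1 hw.1, fun i hi => by rw [map_add, hv.2 i hi, hw.2 i hi, add_zero]⟩
    | smul a v _ hv =>
      exact ⟨Submodule.smul_mem _ _ hv.1, fun i hi => by rw [map_smul, hv.2 i hi, smul_zero]⟩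
  · rintro ⟨hu, hzero⟩
    obtain ⟨x, hx, hpos⟩ := hS.exists_mem_face_pos hτ
    have hactive : ∀ i ∈ S.active x, i ∈ τ := fun i hi => by
      obtain ⟨hi, hxi⟩ := mem_active.1 hi
      by_contra hiτ
      exact (hpos i hi hiτ).ne' hxi
    obtain ⟨ε, hε, hmem, -⟩ := exists_pos_smul_vadd_mem hx.1 hu
      fun i hi => (hzero i (hactive i hi)).ge
    have hmem' : ε • u +ᵥ x ∈ S.face τ :=
      ⟨hmem, fun i hi => by rw [affineMap_smul_vadd, hx.2 i hi, hzero i hi, mul_zero, add_zero]⟩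
    have hdiff := AffineSubspace.vsub_mem_direction
      (subset_affineSpan ℝ _ hmem') (subset_affineSpan ℝ _ hx)
    rw [vadd_vsub] at hdiff
    exact (Submodule.smul_mem_iff _ hε.ne').1 hdiff

/-- The linear parts of the inequalities labelled by `τ`, on the direction of the ambient
subspace. -/
noncomputable def evalLinear (S : IneqSystem E ι) (τ : Finset ι) :
    S.ambient.direction →ₗ[ℝ] τ → ℝ :=
  LinearMap.pi fun i => (S.ineq i).linear ∘ₗ S.ambient.direction.subtype

theorem IsSimple.evalLinear_surjective (hS : S.IsSimple) (hτ : τ ∈ S.nerve) :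
    Function.Surjective (S.evalLinear τ) := by
  classical
  intro t
  obtain ⟨hτI, x, hx⟩ := hτ
  obtain ⟨u, hu, hui⟩ := hS x hx.1 fun i => if hi : i ∈ τ then t ⟨i, hi⟩ else 0
  refine ⟨⟨u, hu⟩, funext fun i => ?_⟩
  exact (hui i (hτI i.2) (hx.2 i i.2)).trans (dif_pos i.2)

theorem IsSimple.finrank_direction_face_add_card [FiniteDimensional ℝ E] (hS : S.IsSimple)
    (hτ : τ ∈ S.nerve) : Module.finrank ℝ (affineSpan ℝ (S.face τ)).direction + τ.card =
      Module.finrank ℝ S.ambient.direction := by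
  have hker : (affineSpan ℝ (S.face τ)).direction =
      (LinearMap.ker (S.evalLinear τ)).map S.ambient.direction.subtype := by
    ext u
    rw [hS.mem_direction_affineSpan_face hτ]
    simp [evalLinear, funext_iff, and_comm]
  rw [hker, Submodule.finrank_map_subtype_eq, add_comm,
    ← LinearMap.finrank_range_add_finrank_ker (S.evalLinear τ),
    LinearMap.range_eq_top.2 (hS.evalLinear_surjective hτ), finrank_top,
    Module.finrank_fintype_fun_eq_card, Fintype.card_coe]

theorem evalLinear_injective_of_extremePoint {v : E} (hv : v ∈ S.polyhedron.extremePoints ℝ) :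
    Function.Injective (S.evalLinear (S.active v)) := by
  have hface : {v} = S.face (S.active v) :=
    eq_face_active_of_isExtreme (isExtreme_singleton.2 hv) (convex_singleton v) rfl
      fun q hq => by rw [Set.mem_singleton_iff.1 hq]
  refine (injective_iff_map_eq_zero _).2 fun u hu => Subtype.ext ?_
  have hzero : ∀ i ∈ S.active v, (S.ineq i).linear u = 0 := fun i hi => congrFun hu ⟨i, hi⟩
  obtain ⟨ε, hε, hmem, -⟩ := exists_pos_smul_vadd_mem hv.1 u.2 fun i hi => (hzero i hi).ge
  have hmem' : ε • (u : E) +ᵥ v ∈ S.face (S.active v) := ⟨hmem, fun i hi => by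
    rw [affineMap_smul_vadd, (mem_active.1 hi).2, hzero i hi, mul_zero, add_zero]⟩
  rw [← hface, Set.mem_singleton_iff, vadd_eq_add, add_eq_right] at hmem'
  exact (smul_eq_zero.1 hmem').resolve_left hε.ne'

end Module

section Normed

variable {E ι : Type*} [NormedAddCommGroup E] [NormedSpace ℝ E] [FiniteDimensional ℝ E]
  {S : IneqSystem E ι}

theorem continuous_ineq (S : IneqSystem E ι) (i : ι) : Continuous (S.ineq i) :=
  (S.ineq i).continuous_of_finiteDimensional

theorem isCompact_face (hS : IsCompact S.polyhedron) (τ : Finset ι) : IsCompact (S.face τ) := by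
  have : S.face τ = S.polyhedron ∩ ⋂ i ∈ τ, S.ineq i ⁻¹' {0} := by
    ext x
    simp only [face, Set.mem_ofPred_eq, Set.mem_inter_iff, Set.mem_iInter, Set.mem_preimage,
      Set.mem_singleton_iff]
  rw [this]
  exact hS.inter_right
    (isClosed_biInter fun i _ => isClosed_singleton.preimage (S.continuous_ineq i))

theorem isSimple_of_card_active_le (hcompact : IsCompact S.polyhedron)
    (hcard : ∀ v ∈ S.polyhedron.extremePoints ℝ,
      (S.active v).card ≤ Module.finrank ℝ S.ambient.direction) : S.IsSimple := by
  intro x hx t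
  obtain ⟨v, hv⟩ := (isCompact_face hcompact (S.active x)).extremePoints_nonempty
    ⟨x, mem_face_active hx⟩
  have hvS := (isExtreme_face active_subset_index).extremePoints_subset_extremePoints hv
  have hinj := evalLinear_injective_of_extremePoint hvS
  have hrank : Module.finrank ℝ S.ambient.direction = Module.finrank ℝ (S.active v → ℝ) := by
    refine le_antisymm (LinearMap.finrank_le_finrank_of_injective hinj) ?_
    rw [Module.finrank_fintype_fun_eq_card, Fintype.card_coe]
    exact hcard v hvS
  obtain ⟨u, hu⟩ := (LinearMap.injective_iff_surjective_of_finrank_eq_finrank hrank).1 hinj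
    fun i => t i
  exact ⟨u, u.2, fun i hi hxi =>
    congrFun hu ⟨i, subset_active active_subset_index hv.1 (mem_active.2 ⟨hi, hxi⟩)⟩⟩

end Normed

section Polytope

variable {d : ℕ} {ι : Type*} {S : IneqSystem (Fin d → ℝ) ι} {τ : Finset ι}

theorem isFaceOf_face (hτ : τ ∈ S.nerve) : IsFaceOf (S.face τ) S.polyhedron := by
  refine ⟨hτ.2, fun _ => ⟨-∑ i ∈ τ, LinearMap.toContinuousLinearMap (S.ineq i).linear, ?_⟩⟩
  obtain ⟨x₀, hx₀⟩ := hτ.2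
  have hsum : ∀ x, (∑ i ∈ τ, LinearMap.toContinuousLinearMap (S.ineq i).linear) x =
      ∑ i ∈ τ, S.ineq i x - ∑ i ∈ τ, S.ineq i 0 := fun x => by
    rw [sum_apply, ← Finset.sum_sub_distrib]
    refine Finset.sum_congr rfl fun i _ => ?_
    rw [LinearMap.coe_toContinuousLinearMap', (S.ineq i).decomp']
    simp
  have hnonneg : ∀ x ∈ S.polyhedron, ∀ i ∈ τ, 0 ≤ S.ineq i x := fun x hx i hi => hx.2 i (hτ.1 hi)
  ext x
  simp only [face, Set.mem_ofPred_eq, neg_apply, hsum]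
  refine and_congr_right fun hx => ⟨fun hzero y hy => ?_, fun hmax => ?_⟩
  · have := Finset.sum_nonneg (hnonneg y hy)
    rw [Finset.sum_eq_zero hzero]
    linarith
  · have hle := hmax x₀ hx₀.1
    rw [Finset.sum_eq_zero hx₀.2] at hle
    exact (Finset.sum_eq_zero_iff_of_nonneg (hnonneg x hx)).1
      (le_antisymm (by linarith) (Finset.sum_nonneg (hnonneg x hx)))

theorem exists_eq_face_of_isFaceOf {F : Set (Fin d → ℝ)} (hF : IsFaceOf F S.polyhedron) :
    ∃ τ ∈ S.nerve, F = S.face τ :=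
  exists_eq_face_of_isExtreme hF.2.isExtreme (hF.2.convex convex_polyhedron) hF.1

/-- A simple polyhedron has the face lattice opposite to the nerve of its inequalities. -/
noncomputable def IsSimple.faceOrderIso (hS : S.IsSimple) :
    {τ // τ ∈ S.nerve}ᵒᵈ ≃o {F : Set (Fin d → ℝ) // IsFaceOf F S.polyhedron} :=
  RelIso.ofSurjective
    (OrderEmbedding.ofMapLEIff
      (fun τ : {τ // τ ∈ S.nerve}ᵒᵈ =>
        (⟨S.face τ.ofDual.1, isFaceOf_face τ.ofDual.2⟩ :
          {F : Set (Fin d → ℝ) // IsFaceOf F S.polyhedron}))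
      fun τ σ => hS.face_subset_face_iff τ.ofDual.2 σ.ofDual.2.1)
    fun ⟨_, hF⟩ =>
      let ⟨τ, hτ, h⟩ := exists_eq_face_of_isFaceOf hF
      ⟨OrderDual.toDual ⟨τ, hτ⟩, Subtype.ext h.symm⟩

theorem IsSimple.combEquiv {d' : ℕ} {S' : IneqSystem (Fin d' → ℝ) ι} (hS : S.IsSimple)
    (hS' : S'.IsSimple) (hnerve : S.nerve = S'.nerve) : CombEquiv S.polyhedron S'.polyhedron := by
  have e := hS'.faceOrderIso
  rw [← hnerve] at e
  exact ⟨hS.faceOrderIso.symm.trans e⟩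

theorem IsSimple.polyDim_face_add_card (hS : S.IsSimple) (hτ : τ ∈ S.nerve) :
    polyDim (S.face τ) + τ.card = Module.finrank ℝ S.ambient.direction :=
  hS.finrank_direction_face_add_card hτ

end Polytope

end IneqSystem

/-! ### Shaving off a face of codimension two -/

/-- The stellar subdivision of the edge `{i, j}` of a simplicial complex `K`, with new vertex `w`.
The complex is given by its set of faces, and `w` is assumed not to be a vertex of `K`. -/
def edgeSubdivision {ι : Type*} [DecidableEq ι] (K : Set (Finset ι)) (i j w : ι) :
    Set (Finset ι) :=
  {τ | ¬ {i, j} ⊆ τ ∧ if w ∈ τ then {i, j} ∪ τ.erase w ∈ K else τ ∈ K}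

namespace IneqSystem

section Module

variable {E ι : Type*} [AddCommGroup E] [Module ℝ E] {S : IneqSystem E ι}
  {i j w : ι} {e : ℝ} {τ : Finset ι} {x : E}

/-- The affine function whose nonnegativity cuts off the face `{i, j}` at height `e`. -/
def cut (S : IneqSystem E ι) (i j : ι) (e : ℝ) : E →ᵃ[ℝ] ℝ :=
  S.ineq i + S.ineq j - AffineMap.const ℝ E e

theorem cut_apply : S.cut i j e x = S.ineq i x + S.ineq j x - e := rfl

theorem cut_linear : (S.cut i j e).linear = (S.ineq i).linear + (S.ineq j).linear :=
  LinearMap.ext fun _ => by simp [cut]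

variable [DecidableEq ι]

/-- The system obtained by adding the inequality `0 ≤ cut i j e` with label `w`. -/
def shave (S : IneqSystem E ι) (i j w : ι) (e : ℝ) : IneqSystem E ι where
  ambient := S.ambient
  index := insert w S.index
  ineq := Function.update S.ineq w (S.cut i j e)

/-- The height `e` is small enough for the cut near the face `{i, j}` to meet exactly the faces
having to do with `{i, j}`. -/
structure IsSmallCut (S : IneqSystem E ι) (i j : ι) (e : ℝ) : Prop where
  pos : 0 < e
  exists_cut_pos : ∀ τ ∈ S.nerve, ¬ {i, j} ⊆ τ → ∃ x ∈ S.face τ, 0 < S.cut i j e x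
  cut_pos : ∀ τ ⊆ S.index, {i, j} ∪ τ ∉ S.nerve → ∀ x ∈ S.face τ, 0 < S.cut i j e x

theorem shave_ineq_self : (S.shave i j w e).ineq w = S.cut i j e := Function.update_self ..

theorem shave_ineq_of_mem (hw : w ∉ S.index) {k : ι} (hk : k ∈ S.index) :
    (S.shave i j w e).ineq k = S.ineq k :=
  Function.update_of_ne (ne_of_mem_of_not_mem hk hw) ..

theorem mem_polyhedron_shave (hw : w ∉ S.index) :
    x ∈ (S.shave i j w e).polyhedron ↔ x ∈ S.polyhedron ∧ 0 ≤ S.cut i j e x := by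
  have hold : (∀ k ∈ S.index, 0 ≤ (S.shave i j w e).ineq k x) ↔ ∀ k ∈ S.index, 0 ≤ S.ineq k x :=
    forall₂_congr fun k hk => by rw [shave_ineq_of_mem hw hk]
  change (x ∈ S.ambient ∧ ∀ k ∈ insert w S.index, _) ↔ _
  rw [Finset.forall_mem_insert, hold, shave_ineq_self, and_comm (a := 0 ≤ _), ← and_assoc]
  rfl

theorem mem_face_shave (hw : w ∉ S.index) (hτ : τ ⊆ S.index) :
    x ∈ (S.shave i j w e).face τ ↔ x ∈ S.face τ ∧ 0 ≤ S.cut i j e x := by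
  have hold : (∀ k ∈ τ, (S.shave i j w e).ineq k x = 0) ↔ ∀ k ∈ τ, S.ineq k x = 0 :=
    forall₂_congr fun k hk => by rw [shave_ineq_of_mem hw (hτ hk)]
  change (x ∈ (S.shave i j w e).polyhedron ∧ ∀ k ∈ τ, _) ↔ _
  rw [mem_polyhedron_shave hw, hold, and_right_comm]
  rfl

theorem mem_face_shave_insert (hw : w ∉ S.index) (hτ : τ ⊆ S.index) :
    x ∈ (S.shave i j w e).face (insert w τ) ↔ x ∈ S.face τ ∧ S.cut i j e x = 0 := by
  have : x ∈ (S.shave i j w e).face (insert w τ) ↔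
      x ∈ (S.shave i j w e).face τ ∧ (S.shave i j w e).ineq w x = 0 := by
    simp only [face, Set.mem_ofPred_eq, Finset.forall_mem_insert]
    tauto
  rw [this, mem_face_shave hw hτ, shave_ineq_self, and_assoc]
  exact and_congr_right fun _ => and_iff_right_of_imp fun h => h.ge

theorem cut_neg_of_mem_face (he : 0 < e) (hx : x ∈ S.face τ) (h : {i, j} ⊆ τ) :
    S.cut i j e x < 0 := by
  rw [cut_apply, hx.2 i (h (by simp)), hx.2 j (h (by simp))]
  linarith

theorem pair_union_mem_nerve (hS : S.IsSmallCut i j e) (hτ : τ ⊆ S.index) (hx : x ∈ S.face τ)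
    (hcut : S.cut i j e x ≤ 0) : {i, j} ∪ τ ∈ S.nerve := by
  by_contra h
  exact hcut.not_gt (hS.cut_pos τ hτ h x hx)

theorem exists_mem_face_cut_eq_zero (hS : S.IsSmallCut i j e) (hpair : {i, j} ∪ τ ∈ S.nerve)
    (hτ : ¬ {i, j} ⊆ τ) : ∃ x ∈ S.face τ, S.cut i j e x = 0 := by
  obtain ⟨hI, z, hz⟩ := hpair
  have hzneg := cut_neg_of_mem_face hS.pos hz Finset.subset_union_left
  have hzτ := face_anti Finset.subset_union_right hz
  obtain ⟨x, hx, hxpos⟩ :=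
    hS.exists_cut_pos τ ⟨Finset.subset_union_right.trans hI, z, hzτ⟩ hτ
  obtain ⟨t, ⟨ht0, ht1⟩, ht⟩ := intermediate_value_Icc (zero_le_one' ℝ)
    (f := fun t => S.cut i j e (AffineMap.lineMap z x t))
    (by simp only [AffineMap.apply_lineMap, AffineMap.lineMap_apply_ring']; fun_prop)
    (show (0 : ℝ) ∈ _ by simpa using ⟨hzneg.le, hxpos.le⟩)
  refine ⟨AffineMap.lineMap z x t, ⟨convex_polyhedron.lineMap_mem hz.1 hx.1 ⟨ht0, ht1⟩,
    fun k hk => ?_⟩, ht⟩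
  rw [AffineMap.apply_lineMap, hzτ.2 k hk, hx.2 k hk, AffineMap.lineMap_same_apply]

theorem nerve_shave (hS : S.IsSmallCut i j e) (hw : w ∉ S.index) :
    (S.shave i j w e).nerve = edgeSubdivision S.nerve i j w := by
  ext τ
  by_cases hwτ : w ∈ τ
  · obtain ⟨σ, hwσ, rfl⟩ : ∃ σ, w ∉ σ ∧ insert w σ = τ :=
      ⟨τ.erase w, Finset.notMem_erase w τ, Finset.insert_erase hwτ⟩
    have hpair : {i, j} ∪ σ ∈ S.nerve → ({i, j} ⊆ insert w σ ↔ {i, j} ⊆ σ) := fun h => by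
      refine Finset.subset_insert_iff_of_notMem fun hwij => hw (h.1 ?_)
      exact Finset.mem_union_left _ hwij
    simp only [edgeSubdivision, Set.mem_ofPred_eq, if_pos hwτ, Finset.erase_insert hwσ]
    constructor
    · rintro ⟨hI, x, hx⟩
      have hσI : σ ⊆ S.index := (Finset.insert_subset_insert_iff hwσ).1 hI
      obtain ⟨hxσ, hcut⟩ := (mem_face_shave_insert hw hσI).1 hx
      have hmem := pair_union_mem_nerve hS hσI hxσ hcut.le
      exact ⟨fun h => (cut_neg_of_mem_face hS.pos hxσ ((hpair hmem).1 h)).ne hcut, hmem⟩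
    · rintro ⟨hnot, hmem⟩
      have hσI := Finset.subset_union_right.trans hmem.1
      obtain ⟨x, hx⟩ := exists_mem_face_cut_eq_zero hS hmem (mt (hpair hmem).2 hnot)
      exact ⟨Finset.insert_subset_insert _ hσI, x, (mem_face_shave_insert hw hσI).2 hx⟩
  · simp only [edgeSubdivision, Set.mem_ofPred_eq, if_neg hwτ]
    constructor
    · rintro ⟨hI, x, hx⟩
      have hτI : τ ⊆ S.index := (Finset.subset_insert_iff_of_notMem hwτ).1 hI
      obtain ⟨hxτ, hcut⟩ := (mem_face_shave hw hτI).1 hx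
      exact ⟨fun h => (cut_neg_of_mem_face hS.pos hxτ h).not_ge hcut, hτI, x, hxτ⟩
    · rintro ⟨hnot, hτ⟩
      obtain ⟨x, hx, hpos⟩ := hS.exists_cut_pos τ hτ hnot
      exact ⟨hτ.1.trans (Finset.subset_insert _ _), x, (mem_face_shave hw hτ.1).2 ⟨hx, hpos.le⟩⟩

theorem exists_eqOn_add_eq (hij : i ≠ j) (hτ : ¬ {i, j} ⊆ τ) (t : ι → ℝ) (c : ℝ) :
    ∃ t' : ι → ℝ, (∀ k ∈ τ, t' k = t k) ∧ t' i + t' j = c := by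
  by_cases hi : i ∈ τ
  · have hj : j ∉ τ := fun hj => hτ (by simp [Finset.insert_subset_iff, hi, hj])
    refine ⟨Function.update t j (c - t i), fun k hk => ?_, ?_⟩
    · exact Function.update_of_ne (ne_of_mem_of_not_mem hk hj) ..
    · rw [Function.update_self, Function.update_of_ne hij, add_sub_cancel]
  · refine ⟨Function.update t i (c - t j), fun k hk => ?_, ?_⟩
    · exact Function.update_of_ne (ne_of_mem_of_not_mem hk hi) ..
    · rw [Function.update_self, Function.update_of_ne hij.symm, sub_add_cancel]

/-- Near a point of the new facet the tight inequalities of `S` together with `i` and `j` are tight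
at some other point, where simplicity of `S` applies. -/
theorem IsSimple.shave (hsimple : S.IsSimple) (hS : S.IsSmallCut i j e) (hij : i ≠ j)
    (hw : w ∉ S.index) : (S.shave i j w e).IsSimple := by
  intro x hx t
  obtain ⟨hxS, hcut⟩ := (mem_polyhedron_shave hw).1 hx
  rcases hcut.eq_or_lt with hzero | hpos
  · have hxτ := mem_face_active hxS
    obtain ⟨hI, z, hz⟩ := pair_union_mem_nerve hS active_subset_index hxτ hzero.ge
    obtain ⟨t', ht', hadd⟩ := exists_eqOn_add_eq hij
      (fun h => (cut_neg_of_mem_face hS.pos hxτ h).ne hzero.symm) t (t w)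
    obtain ⟨u, hu, hut⟩ := hsimple z hz.1 t'
    have hlin : ∀ k ∈ {i, j} ∪ S.active x, (S.ineq k).linear u = t' k :=
      fun k hk => hut k (hI hk) (hz.2 k hk)
    refine ⟨u, hu, fun k hk hkx => ?_⟩
    rcases Finset.mem_insert.1 hk with rfl | hk
    · rw [shave_ineq_self, cut_linear, LinearMap.add_apply, hlin i (by simp), hlin j (by simp),
        hadd]
    · rw [shave_ineq_of_mem hw hk] at hkx ⊢
      have hkτ := mem_active.2 ⟨hk, hkx⟩
      rw [hlin k (Finset.mem_union_right _ hkτ), ht' k hkτ]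
  · obtain ⟨u, hu, hut⟩ := hsimple x hxS t
    refine ⟨u, hu, fun k hk hkx => ?_⟩
    rcases Finset.mem_insert.1 hk with rfl | hk
    · rw [shave_ineq_self] at hkx
      exact absurd hkx hpos.ne'
    · rw [shave_ineq_of_mem hw hk] at hkx ⊢
      exact hut k hk hkx

theorem IsSimple.eventually_exists_cut_pos (hS : S.IsSimple) (hi : i ∈ S.index) (hj : j ∈ S.index)
    (hτ : τ ∈ S.nerve) (hpair : ¬ {i, j} ⊆ τ) :
    ∀ᶠ e in nhds 0, ∃ x ∈ S.face τ, 0 < S.cut i j e x := by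
  obtain ⟨x, hx, hpos⟩ := hS.exists_mem_face_pos hτ
  have hsum : 0 < S.ineq i x + S.ineq j x := by
    by_cases hiτ : i ∈ τ
    · have hjτ : j ∉ τ := fun hjτ => hpair (by simp [Finset.insert_subset_iff, hiτ, hjτ])
      exact add_pos_of_nonneg_of_pos (hx.1.2 i hi) (hpos j hj hjτ)
    · exact add_pos_of_pos_of_nonneg (hpos i hi hiτ) (hx.1.2 j hj)
  filter_upwards [eventually_lt_nhds hsum] with e he
  exact ⟨x, hx, sub_pos.2 he⟩

end Module

section Normed

variable {E ι : Type*} [NormedAddCommGroup E] [NormedSpace ℝ E] [FiniteDimensional ℝ E]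
  [DecidableEq ι] {S : IneqSystem E ι} {i j w : ι} {e : ℝ} {τ : Finset ι}

theorem eventually_forall_cut_pos (hS : IsCompact S.polyhedron) (hi : i ∈ S.index)
    (hj : j ∈ S.index) (hτ : τ ⊆ S.index) (hpair : {i, j} ∪ τ ∉ S.nerve) :
    ∀ᶠ e in nhds 0, ∀ x ∈ S.face τ, 0 < S.cut i j e x := by
  rcases (S.face τ).eq_empty_or_nonempty with hempty | hne
  · simp [hempty]
  obtain ⟨y, hy, hmin⟩ := (isCompact_face hS τ).exists_isMinOn hne
    ((S.continuous_ineq i).add (S.continuous_ineq j)).continuousOn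
  have hsum : 0 < S.ineq i y + S.ineq j y := by
    have hi0 := hy.1.2 i hi
    have hj0 := hy.1.2 j hj
    by_contra hle
    refine hpair ⟨Finset.union_subset (by simp [Finset.insert_subset_iff, hi, hj]) hτ, y, hy.1,
      fun k hk => ?_⟩
    simp only [Finset.mem_union, Finset.mem_insert, Finset.mem_singleton] at hk
    rcases hk with (rfl | rfl) | hk
    · linarith
    · linarith
    · exact hy.2 k hk
  filter_upwards [eventually_lt_nhds hsum] with e he x hx
  exact sub_pos.2 (he.trans_le (hmin hx))

theorem IsSimple.exists_isSmallCut (hS : S.IsSimple) (hcompact : IsCompact S.polyhedron)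
    (hi : i ∈ S.index) (hj : j ∈ S.index) : ∃ e, S.IsSmallCut i j e := by
  have hev : ∀ᶠ e in nhds (0 : ℝ), ∀ τ ∈ S.index.powerset,
      (τ ∈ S.nerve → ¬ {i, j} ⊆ τ → ∃ x ∈ S.face τ, 0 < S.cut i j e x) ∧
        ({i, j} ∪ τ ∉ S.nerve → ∀ x ∈ S.face τ, 0 < S.cut i j e x) := by
    refine (Filter.eventually_all_finset _).2 fun τ hτ => ?_
    simp only [Filter.eventually_and, Filter.eventually_imp_distrib_left]
    exact ⟨hS.eventually_exists_cut_pos hi hj,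
      eventually_forall_cut_pos hcompact hi hj (Finset.mem_powerset.1 hτ)⟩
  obtain ⟨e, he, hpos⟩ :=
    ((hev.filter_mono nhdsWithin_le_nhds).and (self_mem_nhdsWithin (s := Set.Ioi 0))).exists
  exact ⟨e, hpos, fun τ hτ => (he τ (Finset.mem_powerset.2 hτ.1)).1 hτ,
    fun τ hτ => (he τ (Finset.mem_powerset.2 hτ)).2⟩

theorem isCompact_polyhedron_shave (hS : IsCompact S.polyhedron) (hw : w ∉ S.index) :
    IsCompact (S.shave i j w e).polyhedron := by
  have : (S.shave i j w e).polyhedron = S.polyhedron ∩ S.cut i j e ⁻¹' Set.Ici 0 :=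
    Set.ext fun x => mem_polyhedron_shave hw
  rw [this]
  exact hS.inter_right (isClosed_Ici.preimage (S.cut i j e).continuous_of_finiteDimensional)

end Normed

section Polytope

variable {d : ℕ} {ι : Type*} [DecidableEq ι] {S : IneqSystem (Fin d → ℝ) ι} {i j w : ι} {e : ℝ}

theorem isClosedHalfspace_setOf_nonneg {f : (Fin d → ℝ) →ᵃ[ℝ] ℝ} (hf : f.linear ≠ 0) :
    IsClosedHalfspace {x | 0 ≤ f x} := by
  refine ⟨-f.linear, f 0, neg_ne_zero.2 hf, Set.ext fun x => ?_⟩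
  rw [Set.mem_ofPred_eq, Set.mem_ofPred_eq, LinearMap.neg_apply, f.decomp', neg_le_iff_add_nonneg']
  simp

theorem IsSimple.obtainedByShaving (hsimple : S.IsSimple) (hS : S.IsSmallCut i j e) (hij : i ≠ j)
    (hpair : {i, j} ∈ S.nerve) (hw : w ∉ S.index) :
    ObtainedByShaving S.polyhedron (S.shave i j w e).polyhedron := by
  obtain ⟨hI, x, hx⟩ := hpair
  refine ⟨S.face {i, j}, {x | 0 ≤ S.cut i j e x}, isFaceOf_face ⟨hI, x, hx⟩, ?_,
    isClosedHalfspace_setOf_nonneg fun hzero => ?_, ?_, fun v hv hvG => ?_,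
    Set.ext fun x => mem_polyhedron_shave hw⟩
  · have hface := hsimple.polyDim_face_add_card ⟨hI, x, hx⟩
    have hall := hsimple.polyDim_face_add_card ⟨Finset.empty_subset _, x, by
      rw [face_empty]; exact hx.1⟩
    rw [Finset.card_pair hij] at hface
    rw [face_empty] at hall
    exact hface.trans hall.symm
  · obtain ⟨u, -, hu⟩ := hsimple x hx.1 fun _ => 1
    have := LinearMap.congr_fun hzero u
    rw [cut_linear, LinearMap.add_apply, hu i (hI (by simp)) (hx.2 i (by simp)),
      hu j (hI (by simp)) (hx.2 j (by simp))] at this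
    norm_num at this
  · exact Set.disjoint_iff_inter_eq_empty.1 (Set.disjoint_left.2 fun y hy =>
      (cut_neg_of_mem_face hS.pos hy subset_rfl).not_ge)
  · obtain ⟨τ, hτ, hvτ⟩ := exists_eq_face_of_isFaceOf hv
    obtain ⟨y, hy, hpos⟩ := hS.exists_cut_pos τ hτ fun h => hvG (face_anti h (hvτ ▸ rfl))
    rw [← hvτ, Set.mem_singleton_iff] at hy
    rw [hy] at hpos
    exact interior_maximal (fun _ h => le_of_lt h)
      (isOpen_lt continuous_const (S.cut i j e).continuous_of_finiteDimensional) hpos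

end Polytope

end IneqSystem

/-! ### Flag realizations -/

/-- The clique complex of a graph restricted to a finite set `I` of vertices; this is the flag
complex whose edges are those of the graph. -/
def cliqueComplex {ι : Type*} (I : Finset ι) (G : SimpleGraph ι) : Set (Finset ι) :=
  {τ | τ ⊆ I ∧ G.IsClique (τ : Set ι)}

/-- The effect on 1-skeleta of the stellar subdivision of the edge `{i, j}` of the clique complex
of `G` on `I`: the edge is removed, and a new vertex `w` is joined to `i`, `j` and their common
neighbours. -/
structure IsEdgeSubdivision {ι : Type*} (I : Finset ι) (G G' : SimpleGraph ι) (i j w : ι) :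
    Prop where
  left_mem : i ∈ I
  right_mem : j ∈ I
  adj : G.Adj i j
  new_notMem : w ∉ I
  adj_old : ∀ x ∈ I, ∀ y ∈ I, G'.Adj x y ↔ G.Adj x y ∧ s(x, y) ≠ s(i, j)
  adj_new : ∀ x ∈ I, G'.Adj w x ↔ (i ≠ x → G.Adj i x) ∧ (j ≠ x → G.Adj j x)

namespace IsEdgeSubdivision

variable {ι : Type*} [DecidableEq ι] {I σ τ : Finset ι} {G G' : SimpleGraph ι} {i j w : ι}

theorem isClique_old (h : IsEdgeSubdivision I G G' i j w) (hσ : σ ⊆ I) :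
    G'.IsClique (σ : Set ι) ↔ G.IsClique (σ : Set ι) ∧ ¬ {i, j} ⊆ σ := by
  constructor
  · refine fun hG' => ⟨fun x hx y hy hxy =>
      ((h.adj_old x (hσ hx) y (hσ hy)).1 (hG' hx hy hxy)).1, fun hij => ?_⟩
    have hmem := Finset.insert_subset_iff.1 hij
    exact ((h.adj_old i h.left_mem j h.right_mem).1 (hG' hmem.1
      (Finset.singleton_subset_iff.1 hmem.2) h.adj.ne)).2 rfl
  · rintro ⟨hG, hij⟩ x hx y hy hxy
    refine (h.adj_old x (hσ hx) y (hσ hy)).2 ⟨hG hx hy hxy, fun heq => hij ?_⟩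
    rcases Sym2.eq_iff.1 heq with ⟨rfl, rfl⟩ | ⟨rfl, rfl⟩ <;>
      exact Finset.insert_subset_iff.2
        ⟨by assumption, Finset.singleton_subset_iff.2 (by assumption)⟩

theorem isClique_pair_union (h : IsEdgeSubdivision I G G' i j w) (hσ : σ ⊆ I) :
    G.IsClique (({i, j} ∪ σ : Finset ι) : Set ι) ↔
      G.IsClique (σ : Set ι) ∧ ∀ x ∈ σ, G'.Adj w x := by
  have hadj : ∀ x ∈ σ, (G'.Adj w x ↔ (i ≠ x → G.Adj i x) ∧ (j ≠ x → G.Adj j x)) :=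
    fun x hx => h.adj_new x (hσ hx)
  rw [forall₂_congr hadj, Finset.coe_union, Finset.coe_pair, Set.insert_union,
    Set.singleton_union, SimpleGraph.isClique_insert, SimpleGraph.isClique_insert]
  have := h.adj
  simp only [Set.mem_insert_iff, Finset.mem_coe, forall_eq_or_imp, forall_and]
  tauto

theorem edgeSubdivision_cliqueComplex (h : IsEdgeSubdivision I G G' i j w) :
    edgeSubdivision (cliqueComplex I G) i j w = cliqueComplex (insert w I) G' := by
  ext τ
  by_cases hwτ : w ∈ τ
  · obtain ⟨σ, hwσ, rfl⟩ : ∃ σ, w ∉ σ ∧ insert w σ = τ :=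
      ⟨τ.erase w, Finset.notMem_erase w τ, Finset.insert_erase hwτ⟩
    have hwi : w ∉ ({i, j} : Finset ι) := by
      simp only [Finset.mem_insert, Finset.mem_singleton]
      rintro (rfl | rfl)
      exacts [h.new_notMem h.left_mem, h.new_notMem h.right_mem]
    have hpair : {i, j} ⊆ I :=
      Finset.insert_subset_iff.2 ⟨h.left_mem, Finset.singleton_subset_iff.2 h.right_mem⟩
    have hne : ∀ x ∈ σ, w ≠ x := fun x hx hwx => hwσ (hwx ▸ hx)
    simp only [edgeSubdivision, cliqueComplex, Set.mem_ofPred_eq, if_pos hwτ,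
      Finset.erase_insert hwσ, Finset.insert_subset_insert_iff hwσ, Finset.coe_insert,
      Finset.subset_insert_iff_of_notMem hwi, SimpleGraph.isClique_insert, Finset.mem_coe,
      Finset.union_subset_iff, hpair, true_and]
    constructor
    · rintro ⟨hnot, hσ, hclique⟩
      obtain ⟨hG, hw⟩ := (h.isClique_pair_union hσ).1 hclique
      exact ⟨hσ, (h.isClique_old hσ).2 ⟨hG, hnot⟩, fun x hx _ => hw x hx⟩
    · rintro ⟨hσ, hclique, hw⟩
      obtain ⟨hG, hnot⟩ := (h.isClique_old hσ).1 hclique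
      exact ⟨hnot, hσ, (h.isClique_pair_union hσ).2 ⟨hG, fun x hx => hw x hx (hne x hx)⟩⟩
  · simp only [edgeSubdivision, cliqueComplex, Set.mem_ofPred_eq, if_neg hwτ,
      Finset.subset_insert_iff_of_notMem hwτ]
    rw [and_left_comm, and_comm (a := ¬ _)]
    exact and_congr_right fun hτ => (h.isClique_old hτ).symm

end IsEdgeSubdivision

/-- The system `S` is a simple description of a compact polyhedron in which a set of facets
labelled by `I` meets exactly when it meets pairwise, pairwise meeting being adjacency in `G`. -/
structure IneqSystem.IsFlagRealization {d : ℕ} {ι : Type*} (S : IneqSystem (Fin d → ℝ) ι)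
    (I : Finset ι) (G : SimpleGraph ι) : Prop where
  isSimple : S.IsSimple
  isCompact : IsCompact S.polyhedron
  index_eq : S.index = I
  nerve_eq : S.nerve = cliqueComplex I G

namespace IneqSystem.IsFlagRealization

variable {d d' : ℕ} {ι : Type*} {S : IneqSystem (Fin d → ℝ) ι} {S' : IneqSystem (Fin d' → ℝ) ι}
  {I : Finset ι} {G G' : SimpleGraph ι} {i j w : ι}

theorem exists_shave [DecidableEq ι] (hS : S.IsFlagRealization I G)
    (hsub : IsEdgeSubdivision I G G' i j w) : ∃ S' : IneqSystem (Fin d → ℝ) ι,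
      ObtainedByShaving S.polyhedron S'.polyhedron ∧ S'.IsFlagRealization (insert w I) G' := by
  obtain ⟨hsimple, hcompact, rfl, hnerve⟩ := hS
  have hpair : {i, j} ∈ S.nerve := by
    rw [hnerve]
    refine ⟨Finset.insert_subset_iff.2
      ⟨hsub.left_mem, Finset.singleton_subset_iff.2 hsub.right_mem⟩, ?_⟩
    rw [Finset.coe_pair, SimpleGraph.isClique_pair]
    exact fun _ => hsub.adj
  obtain ⟨e, he⟩ := hsimple.exists_isSmallCut hcompact hsub.left_mem hsub.right_mem
  have hw := hsub.new_notMem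
  exact ⟨S.shave i j w e, hsimple.obtainedByShaving he hsub.adj.ne hpair hw,
    hsimple.shave he hsub.adj.ne hw, isCompact_polyhedron_shave hcompact hw, rfl,
    by rw [nerve_shave he hw, hnerve, hsub.edgeSubdivision_cliqueComplex]⟩

theorem combEquiv (hS : S.IsFlagRealization I G) (hS' : S'.IsFlagRealization I G) :
    CombEquiv S.polyhedron S'.polyhedron :=
  hS.isSimple.combEquiv hS'.isSimple (hS.nerve_eq.trans hS'.nerve_eq.symm)

end IneqSystem.IsFlagRealization

/-! ### Separating a point from a polytope by a facet -/

section Facet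

theorem exists_affineMap_ne_zero_of_notMem {k E : Type*} [Field k] [AddCommGroup E] [Module k E]
    {Q : AffineSubspace k E} {q v : E} (hq : q ∈ Q) (hv : v ∉ Q) :
    ∃ h : E →ᵃ[k] k, (∀ y ∈ Q, h y = 0) ∧ h v ≠ 0 := by
  have hvq : v - q ∉ Q.direction := fun hmem => hv (by
    simpa using AffineSubspace.vadd_mem_of_mem_direction hmem hq)
  obtain ⟨f, hfv, hf⟩ := Submodule.exists_dual_map_eq_bot_of_notMem hvq inferInstance
  refine ⟨f.toAffineMap - AffineMap.const k E (f q), fun y hy => ?_, ?_⟩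
  · have : f (y - q) ∈ Q.direction.map f :=
      Submodule.mem_map_of_mem (AffineSubspace.vsub_mem_direction hy hq)
    rwa [hf, Submodule.mem_bot, map_sub] at this
  · rwa [map_sub] at hfv

variable {E : Type*} [AddCommGroup E] [Module ℝ E] {V : Finset E} {x : E} {g h : E →ᵃ[ℝ] ℝ}

theorem affineMap_centroid (hV : V.Nonempty) (h : E →ᵃ[ℝ] ℝ) :
    (V.card : ℝ) * h (V.centroid ℝ id) = ∑ v ∈ V, h v := by
  have hw := V.sum_centroidWeights_eq_one_of_nonempty ℝ hV
  rw [Finset.centroid_def, Finset.map_affineCombination _ _ _ hw,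
    Finset.affineCombination_eq_linear_combination _ _ _ hw, Finset.mul_sum]
  refine Finset.sum_congr rfl fun v _ => ?_
  rw [Finset.centroidWeights_apply, smul_eq_mul, ← mul_assoc,
    mul_inv_cancel₀ (Nat.cast_ne_zero.2 hV.card_ne_zero), one_mul, Function.comp_apply, id]

theorem exists_neg_of_centroid_eq_zero (hV : V.Nonempty) (hcentroid : h (V.centroid ℝ id) = 0)
    (hne : ∃ v ∈ V, h v ≠ 0) : ∃ v ∈ V, h v < 0 := by
  have hsum := affineMap_centroid hV h
  rw [hcentroid, mul_zero] at hsum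
  by_contra! hnonneg
  obtain ⟨v, hv, hne⟩ := hne
  exact hne ((Finset.sum_eq_zero_iff_of_nonneg hnonneg).1 hsum.symm v hv)

theorem centroid_pos (hV : V.Nonempty) (hnonneg : ∀ v ∈ V, 0 ≤ g v) (hne : ∃ v ∈ V, g v ≠ 0) :
    0 < g (V.centroid ℝ id) := by
  obtain ⟨v, hv, hgv⟩ := hne
  have hsum : 0 < ∑ v ∈ V, g v :=
    Finset.sum_pos' hnonneg ⟨v, hv, (hnonneg v hv).lt_of_ne' hgv⟩
  rw [← affineMap_centroid hV] at hsum
  exact pos_of_mul_pos_right hsum (Nat.cast_nonneg _)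

/-- Pivoting: moving `g` in the direction of `h` until a further point of `V` becomes tight. -/
theorem exists_ssubset_tight (hV : ∀ v ∈ V, 0 ≤ g v) (hg : g x < 0)
    (htight : ∀ v ∈ V, g v = 0 → h v = 0) (hx : h x ≤ 0) (hneg : ∃ v ∈ V, h v < 0) :
    ∃ g' : E →ᵃ[ℝ] ℝ, (∀ v ∈ V, 0 ≤ g' v) ∧ g' x < 0 ∧
      {v ∈ V | g v = 0} ⊂ {v ∈ V | g' v = 0} := by
  obtain ⟨v₀, hv₀, hmin⟩ := Finset.exists_min_image {v ∈ V | h v < 0} (fun v => g v / -h v)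
    (by simpa only [Finset.filter_nonempty_iff] using hneg)
  obtain ⟨hv₀V, hv₀neg⟩ := Finset.mem_filter.1 hv₀
  set t := g v₀ / -h v₀
  have ht : 0 ≤ t := div_nonneg (hV v₀ hv₀V) (neg_pos.2 hv₀neg).le
  have happly : ∀ y, (g + t • h) y = g y + t * h y := fun _ => rfl
  refine ⟨g + t • h, fun v hv => ?_, ?_, Finset.ssubset_iff_of_subset ?_ |>.2 ⟨v₀, ?_, ?_⟩⟩
  · rw [happly]
    by_cases hhv : h v < 0
    · have := (le_div_iff₀ (neg_pos.2 hhv)).1 (hmin v (Finset.mem_filter.2 ⟨hv, hhv⟩))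
      linarith
    · exact add_nonneg (hV v hv) (mul_nonneg ht (not_lt.1 hhv))
  · rw [happly]
    exact add_neg_of_neg_of_nonpos hg (mul_nonpos_of_nonneg_of_nonpos ht hx)
  · intro v hv
    obtain ⟨hv, hgv⟩ := Finset.mem_filter.1 hv
    exact Finset.mem_filter.2 ⟨hv, by rw [happly, hgv, htight v hv hgv, mul_zero, add_zero]⟩
  · refine Finset.mem_filter.2 ⟨hv₀V, ?_⟩
    rw [happly, ← neg_neg (h v₀), mul_neg, div_mul_cancel₀ _ (neg_pos.2 hv₀neg).ne', add_neg_cancel]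
  · exact fun hmem => hv₀neg.ne (htight v₀ hv₀V (Finset.mem_filter.1 hmem).2)

theorem exists_tight_spanning (hV : V.Nonempty) (hg : ∀ v ∈ V, 0 ≤ g v) (hx : g x < 0) :
    ∃ f : E →ᵃ[ℝ] ℝ, (∀ v ∈ V, 0 ≤ f v) ∧ f x < 0 ∧
      ∀ v ∈ V, v ∈ affineSpan ℝ (insert (V.centroid ℝ id) {v | v ∈ V ∧ f v = 0}) := by
  obtain ⟨f, ⟨hf, hfx⟩, hmax⟩ := WellFounded.has_min
    (measure fun f : E →ᵃ[ℝ] ℝ => V.card - {v ∈ V | f v = 0}.card).wf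
    {f | (∀ v ∈ V, 0 ≤ f v) ∧ f x < 0} ⟨g, hg, hx⟩
  refine ⟨f, hf, hfx, fun v hv => ?_⟩
  by_contra hspan
  obtain ⟨h, hzero, hhv⟩ := exists_affineMap_ne_zero_of_notMem
    (mem_affineSpan ℝ (Set.mem_insert _ _)) hspan
  have hcentroid := hzero _ (mem_affineSpan ℝ (Set.mem_insert _ _))
  have htight : ∀ v ∈ V, f v = 0 → h v = 0 := fun v hv hfv =>
    hzero v (mem_affineSpan ℝ (Set.mem_insert_of_mem _ ⟨hv, hfv⟩))
  obtain ⟨h, hhx, hcentroid, htight, hne⟩ : ∃ h : E →ᵃ[ℝ] ℝ, h x ≤ 0 ∧ h (V.centroid ℝ id) = 0 ∧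
      (∀ v ∈ V, f v = 0 → h v = 0) ∧ ∃ v ∈ V, h v ≠ 0 := by
    rcases le_total (h x) 0 with hhx | hhx
    · exact ⟨h, hhx, hcentroid, htight, v, hv, hhv⟩
    · exact ⟨-h, neg_nonpos.2 hhx, neg_eq_zero.2 hcentroid,
        fun v hv hfv => neg_eq_zero.2 (htight v hv hfv), v, hv, neg_ne_zero.2 hhv⟩
  obtain ⟨f', hf', hf'x, hlt⟩ := exists_ssubset_tight hf hfx htight hhx
    (exists_neg_of_centroid_eq_zero hV hcentroid hne)
  refine hmax f' ⟨hf', hf'x⟩ (Nat.sub_lt_sub_left ?_ (Finset.card_lt_card hlt))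
  exact (Finset.card_lt_card hlt).trans_le (Finset.card_filter_le _ _)

theorem nonneg_of_mem_convexHull (hg : ∀ v ∈ V, 0 ≤ g v) {y : E}
    (hy : y ∈ convexHull ℝ (V : Set E)) : 0 ≤ g y :=
  convexHull_min (s := (V : Set E)) (t := g ⁻¹' Set.Ici 0) hg ((convex_Ici 0).affine_preimage g) hy

end Facet

section Polytope

variable {d : ℕ} {P F : Set (Fin d → ℝ)} {x : Fin d → ℝ}

theorem exists_affineMap_of_isFaceOf (hF : IsFaceOf F P) :
    ∃ f : (Fin d → ℝ) →ᵃ[ℝ] ℝ, (∀ y ∈ P, 0 ≤ f y) ∧ F = {y ∈ P | f y = 0} := by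
  obtain ⟨⟨x₀, hx₀⟩, hexp⟩ := hF
  obtain ⟨l, rfl⟩ := hexp ⟨x₀, hx₀⟩
  refine ⟨AffineMap.const ℝ _ (l x₀) - l.toLinearMap.toAffineMap,
    fun y hy => sub_nonneg.2 (hx₀.2 y hy), Set.ext fun y => and_congr_right fun hy => ?_⟩
  change (∀ z ∈ P, l z ≤ l y) ↔ l x₀ - l y = 0
  rw [sub_eq_zero]
  exact ⟨fun h => le_antisymm (h x₀ hx₀.1) (hx₀.2 y hy), fun h => h ▸ hx₀.2⟩

theorem isFaceOf_setOf_eq_zero {f : (Fin d → ℝ) →ᵃ[ℝ] ℝ} (hf : ∀ y ∈ P, 0 ≤ f y)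
    (hne : {y ∈ P | f y = 0}.Nonempty) : IsFaceOf {y ∈ P | f y = 0} P := by
  refine ⟨hne, fun _ => ⟨-LinearMap.toContinuousLinearMap f.linear,
    Set.ext fun y => and_congr_right fun hy => ?_⟩⟩
  obtain ⟨x₀, hx₀⟩ := hne
  have hle : ∀ z, -f.linear z ≤ -f.linear y ↔ f y ≤ f z := fun z => by
    rw [neg_le_neg_iff, ← sub_nonneg, ← map_sub, ← vsub_eq_sub, AffineMap.linearMap_vsub,
      vsub_eq_sub, sub_nonneg]
  change f y = 0 ↔ ∀ z ∈ P, -f.linear z ≤ -f.linear y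
  simp only [hle]
  exact ⟨fun h z hz => h ▸ hf z hz, fun h => le_antisymm (hx₀.2 ▸ h x₀ hx₀.1) (hf y hy)⟩

theorem polyDim_add_one_of_affineSpan_insert {p : Fin d → ℝ} (hF : F.Nonempty)
    (hp : p ∉ affineSpan ℝ F) (hspan : affineSpan ℝ (insert p F) = affineSpan ℝ P) :
    polyDim F + 1 = polyDim P := by
  obtain ⟨q, hq⟩ := hF
  have hq := mem_affineSpan ℝ hq
  have hpq : p -ᵥ q ∉ (affineSpan ℝ F).direction := fun h => hp (by
    simpa using AffineSubspace.vadd_mem_of_mem_direction h hq)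
  rw [polyDim, polyDim, ← hspan, ← affineSpan_insert_affineSpan,
    AffineSubspace.direction_affineSpan_insert hq, sup_comm,
    Submodule.finrank_sup_span_singleton hpq]

theorem nonempty_of_polyDim_pos (h : 0 < polyDim P) : P.Nonempty := by
  rw [Set.nonempty_iff_ne_empty]
  rintro rfl
  rw [polyDim, AffineSubspace.span_empty, AffineSubspace.direction_bot, finrank_bot] at h
  exact h.false

theorem exists_nonneg_neg_spanning (hP : IsPolytope P) (hx : x ∈ affineSpan ℝ P) (hxP : x ∉ P) :
    ∃ f : (Fin d → ℝ) →ᵃ[ℝ] ℝ, (∀ y ∈ P, 0 ≤ f y) ∧ f x < 0 ∧ {y ∈ P | f y = 0}.Nonempty ∧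
      ∃ p ∈ P, 0 < f p ∧ affineSpan ℝ (insert p {y ∈ P | f y = 0}) = affineSpan ℝ P := by
  obtain ⟨V, rfl⟩ := hP
  have hVP := subset_convexHull ℝ (V : Set (Fin d → ℝ))
  have hV : V.Nonempty := by
    rw [← Finset.coe_nonempty, ← convexHull_nonempty_iff (𝕜 := ℝ),
      ← affineSpan_nonempty (k := ℝ)]
    exact ⟨x, hx⟩
  obtain ⟨l, u, hlx, hlV⟩ := geometric_hahn_banach_point_closed
    (convex_convexHull ℝ (V : Set (Fin d → ℝ)))
    (V.finite_toSet.isClosed_convexHull ℝ) hxP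
  rw [affineSpan_convexHull] at hx
  obtain ⟨f, hf, hfx, hspan⟩ := exists_tight_spanning
    (g := l.toLinearMap.toAffineMap - AffineMap.const ℝ _ u) hV
    (fun v hv => sub_nonneg.2 (hlV v (hVP hv)).le) (sub_neg.2 hlx)
  set p := V.centroid ℝ id
  set F := {y ∈ convexHull ℝ (V : Set (Fin d → ℝ)) | f y = 0}
  have hp : p ∈ convexHull ℝ (V : Set (Fin d → ℝ)) := V.centroid_mem_convexHull hV
  have htight : {v | v ∈ V ∧ f v = 0} ⊆ F := fun v hv => ⟨hVP hv.1, hv.2⟩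
  have hspanF : ∀ v ∈ V, v ∈ affineSpan ℝ (insert p F) := fun v hv =>
    affineSpan_mono ℝ (Set.insert_subset_insert htight) (hspan v hv)
  refine ⟨f, fun _ => nonneg_of_mem_convexHull hf, hfx, ?_, p, hp, centroid_pos hV hf ?_, ?_⟩
  · by_contra hF
    rw [show F = ∅ from Set.not_nonempty_iff_eq_empty.1 hF, insert_empty_eq] at hspanF
    have hxp := affineSpan_le.2 hspanF hx
    rw [AffineSubspace.mem_affineSpan_singleton] at hxp
    exact hxP (hxp ▸ hp)
  · by_contra! hzero
    exact hfx.ne (AffineMap.eqOn_affineSpan (f := f) (g := 0) hzero hx)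
  · refine le_antisymm (affineSpan_mono ℝ (Set.insert_subset hp fun y hy => hy.1)) ?_
    rw [affineSpan_convexHull]
    exact affineSpan_le.2 hspanF

/-- Every point of the affine span outside a polytope lies strictly beyond some facet. -/
theorem exists_isFacetOf_separating (hP : IsPolytope P) (hx : x ∈ affineSpan ℝ P) (hxP : x ∉ P) :
    ∃ F, IsFacetOf F P ∧ ∀ f : (Fin d → ℝ) →ᵃ[ℝ] ℝ, (∀ y ∈ P, 0 ≤ f y) →
      F = {y ∈ P | f y = 0} → f x < 0 := by
  obtain ⟨f, hf, hfx, hne, p, hp, hfp, hspan⟩ := exists_nonneg_neg_spanning hP hx hxP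
  have hpF : p ∉ affineSpan ℝ {y ∈ P | f y = 0} := fun hmem =>
    hfp.ne' (AffineMap.eqOn_affineSpan (f := f) (g := 0) (fun y hy => hy.2) hmem)
  refine ⟨_, ⟨isFaceOf_setOf_eq_zero hf hne,
    polyDim_add_one_of_affineSpan_insert hne hpF hspan⟩, fun f' hf' heq => ?_⟩
  have hf'p : 0 < f' p := (hf' p hp).lt_of_ne' fun hzero => hfp.ne' (heq.ge ⟨hp, hzero⟩).2
  have hprop : Set.EqOn (f p • f') (f' p • f) (insert p {y ∈ P | f y = 0}) := by
    rintro y (rfl | hy)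
    · exact mul_comm _ _
    · change f p * f' y = f' p * f y
      rw [(heq.le hy).2, hy.2, mul_zero, mul_zero]
  rw [← hspan] at hx
  have hprop_x : f p * f' x = f' p * f x :=
    AffineMap.eqOn_affineSpan (f := f p • f') (g := f' p • f) hprop hx
  exact neg_of_mul_neg_right (hprop_x ▸ mul_neg_of_pos_of_neg hf'p hfx) hfp.le

end Polytope

/-! ### Facet descriptions -/

/-- The system `S` describes the polytope `P` by one inequality for each facet, the facets being
enumerated by `φ`. -/
structure IneqSystem.IsFacetDescription {d : ℕ} {ι : Type*} [Fintype ι]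
    (S : IneqSystem (Fin d → ℝ) ι) (P : Set (Fin d → ℝ)) (φ : ι → Set (Fin d → ℝ)) : Prop where
  injective : Function.Injective φ
  range_eq : Set.range φ = {F | IsFacetOf F P}
  polyhedron_eq : S.polyhedron = P
  ambient_eq : S.ambient = affineSpan ℝ P
  index_eq : S.index = Finset.univ
  face_singleton : ∀ i, S.face {i} = φ i

namespace IneqSystem.IsFacetDescription

variable {d : ℕ} {ι : Type*} [Fintype ι] {S : IneqSystem (Fin d → ℝ) ι} {P : Set (Fin d → ℝ)}
  {φ : ι → Set (Fin d → ℝ)} {τ : Finset ι} {x : Fin d → ℝ} {G : SimpleGraph ι}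

theorem exists_of_isPolytope (hP : IsPolytope P) (hinj : Function.Injective φ)
    (hφ : Set.range φ = {F | IsFacetOf F P}) :
    ∃ S : IneqSystem (Fin d → ℝ) ι, S.IsFacetDescription P φ := by
  have hfacet : ∀ i, IsFacetOf (φ i) P := fun i => hφ.le ⟨i, rfl⟩
  choose f hf hfφ using fun i => exists_affineMap_of_isFaceOf (hfacet i).1
  let S : IneqSystem (Fin d → ℝ) ι := ⟨affineSpan ℝ P, Finset.univ, f⟩
  have hpoly : S.polyhedron = P := by
    refine Set.Subset.antisymm (fun x hx => ?_)
      fun x hx => ⟨subset_affineSpan ℝ P hx, fun i _ => hf i x hx⟩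
    by_contra hxP
    obtain ⟨F, hF, hsep⟩ := exists_isFacetOf_separating hP hx.1 hxP
    obtain ⟨i, rfl⟩ := hφ.ge hF
    exact (hsep (f i) (hf i) (hfφ i)).not_ge (hx.2 i (Finset.mem_univ i))
  refine ⟨S, hinj, hφ, hpoly, rfl, rfl, fun i => ?_⟩
  simp only [face, hpoly, hfφ i, Finset.mem_singleton, forall_eq, S]

theorem mem_face (h : S.IsFacetDescription P φ) : x ∈ S.face τ ↔ x ∈ P ∧ ∀ i ∈ τ, x ∈ φ i := by
  simp only [← h.face_singleton, ← h.polyhedron_eq, face, Set.mem_ofPred_eq, Finset.mem_singleton,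
    forall_eq]
  exact and_congr_right fun hx => forall₂_congr fun i _ => (and_iff_right hx).symm

theorem mem_active_iff (h : S.IsFacetDescription P φ) (hx : x ∈ S.polyhedron) {i : ι} :
    i ∈ S.active x ↔ x ∈ φ i := by
  rw [mem_active, h.index_eq, ← h.face_singleton]
  simp only [Finset.mem_univ, true_and, face, Set.mem_ofPred_eq, hx, Finset.mem_singleton,
    forall_eq]

theorem isCompact (h : S.IsFacetDescription P φ) (hP : IsPolytope P) : IsCompact S.polyhedron := by
  obtain ⟨V, rfl⟩ := hP
  exact h.polyhedron_eq ▸ V.finite_toSet.isCompact_convexHull ℝ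

theorem isSimple (h : S.IsFacetDescription P φ) (hP : IsSimplePolytope P) : S.IsSimple := by
  refine isSimple_of_card_active_le (h.isCompact hP.1) fun v hv => ?_
  obtain ⟨τ, hτ, hvτ⟩ := exists_eq_face_of_isExtreme (isExtreme_singleton.2 hv)
    (convex_singleton v) (Set.singleton_nonempty v)
  have hvertex : IsVertexOf v P := by
    rw [IsVertexOf, hvτ, ← h.polyhedron_eq]
    exact isFaceOf_face hτ
  have himage : {F | IsFacetOf F P ∧ v ∈ F} = φ '' S.active v := by
    have hactive : (S.active v : Set ι) = φ ⁻¹' {F | v ∈ F} :=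
      Set.ext fun _ => h.mem_active_iff hv.1
    rw [hactive, Set.image_preimage_eq_range_inter, h.range_eq]
    rfl
  rw [← Set.ncard_coe_finset, ← Set.ncard_image_of_injective _ h.injective, ← himage,
    hP.2 v hvertex, polyDim, h.ambient_eq]

theorem nerve_eq (h : S.IsFacetDescription P φ) (hP : IsFlagPolytope P) (hne : P.Nonempty)
    (hadj : ∀ i j, i ≠ j → (G.Adj i j ↔ (φ i ∩ φ j).Nonempty)) :
    S.nerve = cliqueComplex Finset.univ G := by
  have hfacet : ∀ i, IsFacetOf (φ i) P := fun i => h.range_eq.le ⟨i, rfl⟩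
  ext τ
  rw [nerve, h.index_eq]
  refine and_congr_right fun _ => ⟨fun ⟨x, hx⟩ i hi j hj hij => ?_, fun hclique => ?_⟩
  · have hxφ := (h.mem_face.1 hx).2
    exact (hadj i j hij).2 ⟨x, hxφ i hi, hxφ j hj⟩
  · rcases τ.eq_empty_or_nonempty with rfl | hτ
    · rwa [face_empty, h.polyhedron_eq]
    have hpairwise : ∀ F ∈ φ '' τ, ∀ F' ∈ φ '' τ, (F ∩ F').Nonempty := by
      rintro _ ⟨i, hi, rfl⟩ _ ⟨j, hj, rfl⟩
      rcases eq_or_ne i j with rfl | hij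
      · rw [Set.inter_self]
        exact (hfacet i).1.1
      · exact (hadj i j hij).1 (hclique hi hj hij)
    obtain ⟨x, hx⟩ := hP.2 (φ '' τ) (hτ.to_set.image φ)
      (Set.forall_mem_image.2 fun i _ => hfacet i) hpairwise
    obtain ⟨i, hi⟩ := hτ
    exact ⟨x, h.mem_face.2 ⟨(hfacet i).1.2.subset (hx _ ⟨i, hi, rfl⟩),
      fun j hj => hx _ ⟨j, hj, rfl⟩⟩⟩

theorem isFlagRealization (h : S.IsFacetDescription P φ) (hP : IsFlagPolytope P) (hne : P.Nonempty)
    (hadj : ∀ i j, i ≠ j → (G.Adj i j ↔ (φ i ∩ φ j).Nonempty)) :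
    S.IsFlagRealization Finset.univ G :=
  ⟨h.isSimple hP.1, h.isCompact hP.1.1, h.index_eq, h.nerve_eq hP hne hadj⟩

end IneqSystem.IsFacetDescription

/-! ### Arcs of a cycle -/

section Arc

variable {n : ℕ}

/-- The number of counterclockwise steps from `a` to `b` around an `n`-cycle. -/
def cycDist (a b : Fin n) : ℕ := (b - a).val

/-- An arc of length at least two of an `n`-cycle, given by its start and its end. These arcs label
the centrally symmetric pairs of diagonals of the `2n`-gon. -/
abbrev Arc (n : ℕ) : Type := {p : Fin n × Fin n // 2 ≤ cycDist p.1 p.2}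

/-- The number of steps of an arc. -/
def Arc.len (w : Arc n) : ℕ := cycDist w.1.1 w.1.2

/-- The vertex `c` lies on the arc `w` and is not an endpoint of it. -/
def Arc.Inside (w : Arc n) (c : Fin n) : Prop := 0 < cycDist w.1.1 c ∧ cycDist w.1.1 c < w.len

theorem cycDist_eq_ite (a b : Fin n) :
    cycDist a b = if a.val ≤ b.val then b.val - a.val else b.val + n - a.val := by
  split_ifs with h
  · exact Fin.sub_val_of_le h
  · have := Fin.coe_sub_iff_lt.2 (not_le.1 h)
    rw [cycDist, this]
    omega

theorem cycDist_eq_zero_iff {a b : Fin n} : cycDist a b = 0 ↔ b = a := by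
  have := a.neZero
  rw [cycDist, Fin.val_eq_zero_iff, sub_eq_zero]

theorem cycDist_left_inj {a a' b : Fin n} : cycDist a b = cycDist a' b ↔ a = a' := by
  have := a.neZero
  rw [cycDist, cycDist, Fin.val_inj, sub_right_inj]

theorem cycDist_right_inj {a b b' : Fin n} : cycDist a b = cycDist a b' ↔ b = b' := by
  have := a.neZero
  rw [cycDist, cycDist, Fin.val_inj, sub_left_inj]

theorem cycDist_eq_one_iff [NeZero n] (hn : 2 ≤ n) {a b : Fin n} :
    cycDist a b = 1 ↔ b - 1 = a := by
  rw [cycDist, sub_eq_iff_eq_add, ← sub_eq_iff_eq_add', ← Fin.val_inj, Fin.val_one',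
    Nat.mod_eq_of_lt hn]

namespace Arc

variable {w v : Arc n}

theorem inside_iff_cycDist_right (w : Arc n) (c : Fin n) :
    w.Inside c ↔ 0 < cycDist c w.1.2 ∧ cycDist c w.1.2 < w.len := by
  rw [Inside, len]
  simp only [cycDist_eq_ite]
  split_ifs <;> omega

theorem not_inside_swap_of_len_eq (h : w.len = v.len) (h₁ : ¬ w.Inside v.1.1)
    (h₂ : ¬ w.Inside v.1.2) : ¬ v.Inside w.1.1 ∧ ¬ v.Inside w.1.2 := by
  simp only [Inside, len, cycDist_eq_ite] at *
  constructor <;> split_ifs at * <;> omega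

end Arc

end Arc

/-! ### The compatibility graph -/

section CompatGraph

variable {n : ℕ}

/-- Labels of the facets met on the way from the cube to the associahedron: the lower (`red`) and
upper (`blue`) facets of the cube, which become the coloured diameters, and one new facet for each
arc, which becomes a pair of diagonals. -/
inductive FacetLabel (n : ℕ)
  | red (a : Fin n)
  | blue (b : Fin n)
  | arc (w : Arc n)
  deriving DecidableEq, Fintype

/-- The labels of the facets present once the arcs in `C` have been cut. -/
def availableLabels (C : Finset (Arc n)) : Finset (FacetLabel n) :=
  {x | ∀ w, x = .arc w → w ∈ C}

/-- The facets `red a` and `blue b` are disjoint once the arcs in `C` have been cut: either they are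
opposite facets of the cube or their intersection has been shaved off. -/
def Separated (C : Finset (Arc n)) (a b : Fin n) : Prop :=
  cycDist a b = 1 ∨ ∃ w ∈ C, w.1 = (a, b)

/-- One orientation of each pair of labels of facets that meet once the arcs in `C` have been
cut. -/
def HalfCompat (C : Finset (Arc n)) : FacetLabel n → FacetLabel n → Prop
  | .red _, .red _ => True
  | .blue _, .blue _ => True
  | .red a, .blue b => ¬ Separated C a b
  | .red a, .arc w => ¬ w.Inside a
  | .blue a, .arc w => ¬ w.Inside a
  | .arc w, .arc v => w.len ≤ v.len ∧ ¬ w.Inside v.1.1 ∧ ¬ w.Inside v.1.2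
  | _, _ => False

/-- The graph of pairs of facets that meet once the arcs in `C` have been cut. -/
def compatGraph (C : Finset (Arc n)) : SimpleGraph (FacetLabel n) :=
  SimpleGraph.fromRel (HalfCompat C)

/-- The order in which arcs are cut: shorter arcs first. -/
structure Arc.IsNext (w : Arc n) (C : Finset (Arc n)) : Prop where
  notMem : w ∉ C
  len_le : ∀ v ∈ C, v.len ≤ w.len
  mem_of_len_lt : ∀ v : Arc n, v.len < w.len → v ∈ C

variable {C : Finset (Arc n)} {w v : Arc n}

theorem red_mem_availableLabels {a : Fin n} : .red a ∈ availableLabels C := by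
  simp [availableLabels]

theorem blue_mem_availableLabels {b : Fin n} : .blue b ∈ availableLabels C := by
  simp [availableLabels]

theorem arc_mem_availableLabels : .arc w ∈ availableLabels C ↔ w ∈ C := by
  simp only [availableLabels, Finset.mem_filter, Finset.mem_univ, true_and, FacetLabel.arc.injEq,
    forall_eq']

theorem availableLabels_insert :
    availableLabels (insert w C) = insert (.arc w) (availableLabels C) := by
  ext (a | b | v) <;>
    simp [red_mem_availableLabels, blue_mem_availableLabels, arc_mem_availableLabels]

theorem availableLabels_univ : availableLabels (Finset.univ : Finset (Arc n)) = Finset.univ := by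
  simp [availableLabels]

theorem Arc.IsNext.separated_iff (hw : w.IsNext C) {a b : Fin n} (h : a = w.1.1 ∨ b = w.1.2) :
    Separated C a b ↔ 0 < cycDist a b ∧ cycDist a b < w.len := by
  have hlen : 2 ≤ w.len := w.2
  constructor
  · rintro (hone | ⟨v, hv, hvab⟩)
    · omega
    · have hvlen : v.len = cycDist a b := by rw [Arc.len, hvab]
      have hv2 : 2 ≤ v.len := v.2
      refine ⟨by omega, hvlen ▸ (hw.len_le v hv).lt_of_ne fun heq => hw.notMem ?_⟩
      rw [hvlen, Arc.len] at heq
      have : v = w := Subtype.ext <| hvab.trans <| by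
        rcases h with rfl | rfl
        · rw [cycDist_right_inj.1 heq]
        · rw [cycDist_left_inj.1 heq]
      exact this ▸ hv
  · rintro ⟨hpos, hlt⟩
    rcases (Nat.succ_le_of_lt hpos).eq_or_lt with hone | htwo
    · exact Or.inl hone.symm
    · exact Or.inr ⟨⟨(a, b), htwo⟩, hw.mem_of_len_lt _ hlt, rfl⟩

theorem compatGraph_adj_red_blue {a b : Fin n} :
    (compatGraph C).Adj (.red a) (.blue b) ↔ ¬ Separated C a b := by
  simp [compatGraph, HalfCompat]

theorem compatGraph_adj_arc_arc_of_len_le (hne : w ≠ v) (hlen : v.len ≤ w.len) :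
    (compatGraph C).Adj (.arc w) (.arc v) ↔ ¬ v.Inside w.1.1 ∧ ¬ v.Inside w.1.2 := by
  simp only [compatGraph, HalfCompat, SimpleGraph.fromRel_adj, ne_eq, FacetLabel.arc.injEq, hne,
    not_false_eq_true, true_and]
  refine ⟨?_, fun h => Or.inr ⟨hlen, h⟩⟩
  rintro (⟨hle, h₁, h₂⟩ | h)
  · exact Arc.not_inside_swap_of_len_eq (hle.antisymm hlen) h₁ h₂
  · exact h.2

theorem Arc.IsNext.adj_arc_iff (hw : w.IsNext C) {x : FacetLabel n} (hx : x ∈ availableLabels C) :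
    (compatGraph (insert w C)).Adj (.arc w) x ↔
      (.red w.1.1 ≠ x → (compatGraph C).Adj (.red w.1.1) x) ∧
        (.blue w.1.2 ≠ x → (compatGraph C).Adj (.blue w.1.2) x) := by
  rcases x with c | c | v
  · have hright : w.Inside c ↔ Separated C c w.1.2 := by
      rw [w.inside_iff_cycDist_right, hw.separated_iff (Or.inr rfl)]
    simp [compatGraph, HalfCompat, hright]
  · have hleft : w.Inside c ↔ Separated C w.1.1 c := (hw.separated_iff (Or.inl rfl)).symm
    simp [compatGraph, HalfCompat, hleft]
  · have hv : v ∈ C := arc_mem_availableLabels.1 hx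
    have hne : w ≠ v := fun h => hw.notMem (h ▸ hv)
    rw [compatGraph_adj_arc_arc_of_len_le hne (hw.len_le v hv)]
    simp [compatGraph, HalfCompat]

theorem separated_insert {a b : Fin n} :
    Separated (insert w C) a b ↔ Separated C a b ∨ (a, b) = w.1 := by
  simp only [Separated, Finset.exists_mem_insert, eq_comm (a := w.1)]
  rw [or_left_comm, or_comm]

theorem compatGraph_insert_adj (x y : FacetLabel n) :
    (compatGraph (insert w C)).Adj x y ↔
      (compatGraph C).Adj x y ∧ s(x, y) ≠ s(.red w.1.1, .blue w.1.2) := by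
  rcases x with a | b | v <;> rcases y with a' | b' | v' <;>
    simp [compatGraph, HalfCompat, separated_insert, Prod.ext_iff, imp_not_comm]

theorem Arc.IsNext.isEdgeSubdivision (hw : w.IsNext C) :
    IsEdgeSubdivision (availableLabels C) (compatGraph C) (compatGraph (insert w C))
      (.red w.1.1) (.blue w.1.2) (.arc w) where
  left_mem := red_mem_availableLabels
  right_mem := blue_mem_availableLabels
  adj := by
    rw [compatGraph_adj_red_blue, hw.separated_iff (Or.inl rfl)]
    exact fun h => h.2.ne rfl
  new_notMem := arc_mem_availableLabels.not.2 hw.notMem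
  adj_old _ _ _ _ := compatGraph_insert_adj _ _
  adj_new _ := hw.adj_arc_iff

end CompatGraph

/-! ### From the cube to the associahedron -/

section Cube

variable {n : ℕ}

theorem forall_mem_availableLabels_empty {p : FacetLabel n → Prop} :
    (∀ x ∈ availableLabels ∅, p x) ↔ (∀ a, p (.red a)) ∧ ∀ b, p (.blue b) := by
  refine ⟨fun h => ⟨fun a => h _ red_mem_availableLabels, fun b => h _ blue_mem_availableLabels⟩,
    fun h => ?_⟩
  rintro (a | b | w) hx
  · exact h.1 a
  · exact h.2 b
  · exact absurd (arc_mem_availableLabels.1 hx) (Finset.notMem_empty w)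

variable [NeZero n] {τ : Finset (FacetLabel n)} {C : Finset (Arc n)}

/-- The description of `[0, 1] ^ n` by `0 ≤ x a` (red) and `x (b - 1) ≤ 1` (blue). The shift makes
`red a` opposite to `blue (a + 1)`, that is `cycDist a b = 1`; no inequality is labelled by an
arc. -/
noncomputable def cubeSystem (n : ℕ) [NeZero n] : IneqSystem (Fin n → ℝ) (FacetLabel n) where
  ambient := ⊤
  index := availableLabels ∅
  ineq
    | .red a => (LinearMap.proj (φ := fun _ => ℝ) a).toAffineMap
    | .blue b => AffineMap.const ℝ _ 1 - (LinearMap.proj (φ := fun _ => ℝ) (b - 1)).toAffineMap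
    | .arc _ => 0

theorem cubeSystem_ineq_red (a : Fin n) (x : Fin n → ℝ) :
    (cubeSystem n).ineq (.red a) x = x a := rfl

theorem cubeSystem_ineq_blue (b : Fin n) (x : Fin n → ℝ) :
    (cubeSystem n).ineq (.blue b) x = 1 - x (b - 1) := rfl

theorem polyhedron_cubeSystem : (cubeSystem n).polyhedron = Set.Icc 0 1 := by
  ext x
  have hupper : (∀ b : Fin n, x (b - 1) ≤ 1) ↔ ∀ a, x a ≤ 1 :=
    (Equiv.subRight (1 : Fin n)).forall_congr_left.trans (by simp)
  rw [Set.mem_Icc, Pi.le_def, Pi.le_def]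
  simp only [Pi.zero_apply, Pi.one_apply, ← hupper]
  refine (and_iff_right (AffineSubspace.mem_top ℝ _ x)).trans ?_
  refine forall_mem_availableLabels_empty.trans ?_
  simp only [cubeSystem_ineq_red, cubeSystem_ineq_blue, sub_nonneg]

theorem isSimple_cubeSystem : (cubeSystem n).IsSimple := by
  intro x _ t
  refine ⟨fun a => if x a = 0 then t (.red a) else -t (.blue (a + 1)), by simp [cubeSystem],
    forall_mem_availableLabels_empty.2 ⟨fun a ha => ?_, fun b hb => ?_⟩⟩
  · exact if_pos ha
  · rw [cubeSystem_ineq_blue, sub_eq_zero] at hb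
    simp [cubeSystem, ← hb]

theorem nonempty_face_cubeSystem_iff (hτ : τ ⊆ availableLabels ∅) :
    ((cubeSystem n).face τ).Nonempty ↔ ∀ b, .blue b ∈ τ → .red (b - 1) ∉ τ := by
  constructor
  · rintro ⟨x, -, hx⟩ b hb ha
    have h₀ : x (b - 1) = 0 := hx _ ha
    have h₁ : 1 - x (b - 1) = 0 := hx _ hb
    linarith
  · intro h
    refine ⟨fun a => if .blue (a + 1) ∈ τ then 1 else 0, ?_, ?_⟩
    · rw [polyhedron_cubeSystem]
      constructor <;> intro a <;> dsimp <;> split_ifs <;> norm_num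
    · rintro (a | b | w) hmem
      · refine (cubeSystem_ineq_red a _).trans (if_neg fun hb => ?_)
        exact h _ hb ((add_sub_cancel_right a 1).symm ▸ hmem)
      · rw [cubeSystem_ineq_blue, sub_add_cancel, if_pos hmem, sub_self]
      · exact absurd (arc_mem_availableLabels.1 (hτ hmem)) (Finset.notMem_empty w)

theorem separated_empty_iff (hn : 2 ≤ n) {a b : Fin n} : Separated ∅ a b ↔ b - 1 = a := by
  simp [Separated, cycDist_eq_one_iff hn]

theorem isClique_compatGraph_empty_iff (hn : 2 ≤ n) (hτ : τ ⊆ availableLabels ∅) :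
    (compatGraph ∅).IsClique (τ : Set (FacetLabel n)) ↔ ∀ b, .blue b ∈ τ → .red (b - 1) ∉ τ := by
  refine ⟨fun h b hb ha => ?_, fun h => ?_⟩
  · exact compatGraph_adj_red_blue.1 (h ha hb (by simp))
      ((separated_empty_iff hn).2 rfl)
  · have hadj : ∀ a b, .red a ∈ τ → .blue b ∈ τ → (compatGraph ∅).Adj (.red a) (.blue b) :=
      fun a b ha hb => compatGraph_adj_red_blue.2 fun hab =>
        h b hb (((separated_empty_iff hn).1 hab).symm ▸ ha)
    have harc : ∀ w, .arc w ∉ τ := fun w hw =>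
      Finset.notMem_empty w (arc_mem_availableLabels.1 (hτ hw))
    rintro (a | b | w) hx (a' | b' | w') hy hne
    · simpa [compatGraph, HalfCompat] using hne
    · exact hadj a b' hx hy
    · exact absurd hy (harc w')
    · exact (hadj a' b hy hx).symm
    · simpa [compatGraph, HalfCompat] using hne
    · exact absurd hy (harc w')
    all_goals exact absurd hx (harc w)

theorem nerve_cubeSystem (hn : 2 ≤ n) :
    (cubeSystem n).nerve = cliqueComplex (availableLabels ∅) (compatGraph ∅) :=
  Set.ext fun _ => and_congr_right fun hτ =>
    (nonempty_face_cubeSystem_iff hτ).trans (isClique_compatGraph_empty_iff hn hτ).symm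

theorem isFlagRealization_cubeSystem (hn : 2 ≤ n) :
    (cubeSystem n).IsFlagRealization (availableLabels ∅) (compatGraph ∅) where
  isSimple := isSimple_cubeSystem
  isCompact := by rw [polyhedron_cubeSystem]; exact isCompact_Icc
  index_eq := rfl
  nerve_eq := nerve_cubeSystem hn

/-- Shorter arcs must be cut before longer ones. -/
theorem exists_shaving_relSeries (hn : 2 ≤ n) (hC : ∀ w ∈ C, ∀ v : Arc n, v.len < w.len → v ∈ C) :
    ∃ (q : RelSeries {p : Set (Fin n → ℝ) × Set (Fin n → ℝ) | ObtainedByShaving p.1 p.2})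
      (S : IneqSystem (Fin n → ℝ) (FacetLabel n)), q.head = Set.Icc 0 1 ∧ q.last = S.polyhedron ∧
        S.IsFlagRealization (availableLabels C) (compatGraph C) := by
  induction C using Finset.induction_on_max_value Arc.len with
  | empty => exact ⟨RelSeries.singleton _ (Set.Icc 0 1), cubeSystem n, rfl,
      polyhedron_cubeSystem.symm, isFlagRealization_cubeSystem hn⟩
  | insert w C hw hmax ih =>
    have hmem : ∀ v ∈ insert w C, v.len < w.len → v ∈ C := fun v hv hlt =>
      Finset.mem_of_mem_insert_of_ne hv fun h => hlt.ne (congrArg Arc.len h)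
    have hnext : w.IsNext C := ⟨hw, hmax, fun v hlt =>
      hmem v (hC w (Finset.mem_insert_self w C) v hlt) hlt⟩
    obtain ⟨q, S, hhead, hlast, hS⟩ := ih fun u hu v hlt =>
      hmem v (hC u (Finset.mem_insert_of_mem hu) v hlt) (hlt.trans_le (hmax u hu))
    obtain ⟨S', hshave, hS'⟩ := hS.exists_shave hnext.isEdgeSubdivision
    refine ⟨q.snoc S'.polyhedron (hlast ▸ hshave), S', (RelSeries.head_snoc ..).trans hhead,
      RelSeries.last_snoc .., ?_⟩
    rwa [availableLabels_insert]

end Cube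

/-! ### The polygon model -/

section Chord

variable {N p q r s : ℕ}

/-- The chord between two vertices of an `N`-gon. The vertices are given by natural numbers, so that
crossing becomes a condition on the usual order of the representatives in `[0, N)`. -/
def chord (N p q : ℕ) : Finset (ZMod N) := {(p : ZMod N), (q : ZMod N)}

theorem natCast_zmod_inj (hp : p < N) (hq : q < N) : (p : ZMod N) = q ↔ p = q := by
  rw [ZMod.natCast_eq_natCast_iff', Nat.mod_eq_of_lt hp, Nat.mod_eq_of_lt hq]

theorem chord_comm (N p q : ℕ) : chord N p q = chord N q p := Finset.pair_comm _ _

theorem chord_add_self (N p q : ℕ) : chord N (p + N) q = chord N p q := by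
  rw [chord, Nat.cast_add, ZMod.natCast_self, add_zero, chord]

theorem pair_eq_pair_iff {α : Type*} [DecidableEq α] {a b c d : α} :
    ({a, b} : Finset α) = {c, d} ↔ a = c ∧ b = d ∨ a = d ∧ b = c := by
  rw [← Finset.coe_inj, Finset.coe_pair, Finset.coe_pair, Set.pair_eq_pair_iff]

theorem chord_inj (hpq : p < q) (hq : q < N) (hrs : r < s) (hs : s < N) :
    chord N p q = chord N r s ↔ p = r ∧ q = s := by
  rw [chord, chord, pair_eq_pair_iff, natCast_zmod_inj (hpq.trans hq) (hrs.trans hs),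
    natCast_zmod_inj hq hs, natCast_zmod_inj (hpq.trans hq) hs, natCast_zmod_inj hq (hrs.trans hs)]
  omega

theorem strictBtw_iff_val [NeZero N] {a b c : ZMod N} :
    StrictBtw N a c b ↔
      a.val < c.val ∧ c.val < b.val ∨ b.val < a.val ∧ (a.val < c.val ∨ c.val < b.val) := by
  have hsub : ∀ x : ZMod N,
      (x - a).val = if a.val ≤ x.val then x.val - a.val else x.val + N - a.val := by
    intro x
    split_ifs with h
    · exact ZMod.val_sub h
    · have hne : a - x ≠ 0 := fun h₀ => h (congrArg ZMod.val (sub_eq_zero.1 h₀)).le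
      rw [← neg_sub, ZMod.neg_val, if_neg hne, ZMod.val_sub (not_le.1 h).le]
      have := x.val_lt
      omega
  have ha := a.val_lt
  have hb := b.val_lt
  have hc := c.val_lt
  rw [StrictBtw, hsub, hsub]
  split_ifs <;> omega

theorem Crosses.symm [NeZero N] {e f : Finset (ZMod N)} (h : Crosses N e f) : Crosses N f e := by
  obtain ⟨a, b, c, d, rfl, rfl, hacb, hbda⟩ := h
  refine ⟨c, d, b, a, rfl, Finset.pair_comm a b, ?_, ?_⟩ <;>
    rw [strictBtw_iff_val] at * <;> omega

theorem crosses_chord_iff (hpq : p < q) (hq : q < N) (hrs : r < s) (hs : s < N) :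
    Crosses N (chord N p q) (chord N r s) ↔ p < r ∧ r < q ∧ q < s ∨ r < p ∧ p < s ∧ s < q := by
  have : NeZero N := ⟨by omega⟩
  have hpval := ZMod.val_cast_of_lt (hpq.trans hq)
  have hqval := ZMod.val_cast_of_lt hq
  have hrval := ZMod.val_cast_of_lt (hrs.trans hs)
  have hsval := ZMod.val_cast_of_lt hs
  constructor
  · rintro ⟨a, b, c, d, hab, hcd, hacb, hbda⟩
    rw [strictBtw_iff_val] at hacb hbda
    rcases pair_eq_pair_iff.1 hab with ⟨rfl, rfl⟩ | ⟨rfl, rfl⟩ <;>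
    rcases pair_eq_pair_iff.1 hcd with ⟨rfl, rfl⟩ | ⟨rfl, rfl⟩ <;> omega
  · rintro (h | h)
    · refine ⟨p, q, r, s, rfl, rfl, ?_, ?_⟩ <;> rw [strictBtw_iff_val] <;> omega
    · refine ⟨p, q, s, r, rfl, chord_comm N r s, ?_, ?_⟩ <;> rw [strictBtw_iff_val] <;> omega

theorem isDiag_pair_iff {a b : ZMod N} : IsDiag N {a, b} ↔ b ≠ a ∧ b ≠ a + 1 ∧ b ≠ a - 1 := by
  refine ⟨?_, fun h => ⟨a, b, rfl, h⟩⟩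
  rintro ⟨c, d, hcd, h₁, h₂, h₃⟩
  rcases pair_eq_pair_iff.1 hcd with ⟨rfl, rfl⟩ | ⟨rfl, rfl⟩
  · exact ⟨h₁, h₂, h₃⟩
  · exact ⟨h₁.symm, fun h => h₃ (eq_sub_of_add_eq h.symm), fun h => h₂ (eq_add_of_sub_eq h.symm)⟩

theorem isDiag_chord_iff (hpq : p < q) (hq : q < N) :
    IsDiag N (chord N p q) ↔ q ≠ p + 1 ∧ q + 1 ≠ p + N := by
  have hsucc : (q : ZMod N) = p + 1 ↔ q = p + 1 := by
    rw [← natCast_zmod_inj hq (by omega), Nat.cast_succ]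
  have hpred : (q : ZMod N) = p - 1 ↔ q + 1 = p + N := by
    rw [eq_sub_iff_add_eq, ← Nat.cast_succ, ZMod.natCast_eq_natCast_iff',
      Nat.mod_eq_of_lt (hpq.trans hq)]
    rcases (Nat.succ_le_of_lt hq).eq_or_lt with rfl | hlt
    · rw [Nat.mod_self]
      omega
    · rw [Nat.mod_eq_of_lt hlt]
      omega
  rw [chord, isDiag_pair_iff, Ne, natCast_zmod_inj hq (hpq.trans hq), Ne, hsucc, Ne, hpred]
  omega

theorem IsDiag.exists_chord [NeZero N] {e : Finset (ZMod N)} (he : IsDiag N e) :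
    ∃ p q, p < q ∧ q < N ∧ e = chord N p q := by
  obtain ⟨a, b, rfl, hba, -⟩ := he
  have hchord : ∀ a b : ZMod N, {a, b} = chord N a.val b.val := fun a b => by
    rw [chord, ZMod.natCast_zmod_val, ZMod.natCast_zmod_val]
  rcases ((ZMod.val_injective N).ne hba).lt_or_gt with h | h
  · exact ⟨b.val, a.val, h, a.val_lt, (hchord a b).trans (chord_comm ..)⟩
  · exact ⟨a.val, b.val, h, b.val_lt, hchord a b⟩

end Chord

section Model

variable {n p q : ℕ}

theorem centralSym_chord (n p q : ℕ) :
    centralSym n (chord (2 * n) p q) = chord (2 * n) (p + n) (q + n) := by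
  simp only [centralSym, chord, Finset.image_insert, Finset.image_singleton, Nat.cast_add]

theorem centralSym_chord_add (n p q : ℕ) :
    centralSym n (chord (2 * n) (p + n) q) = chord (2 * n) p (q + n) := by
  rw [centralSym_chord, add_assoc, ← two_mul, chord_add_self]

theorem isDiameter_chord_iff (hpq : p < q) (hq : q < 2 * n) :
    IsDiameter n (chord (2 * n) p q) ↔ q = p + n := by
  have : NeZero n := ⟨by omega⟩
  constructor
  · rintro ⟨a, ha⟩
    have hlt : a.val < 2 * n := a.val_lt
    have ha' : chord (2 * n) p q = chord (2 * n) a.val (a.val + n) := by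
      rw [ha, chord, Nat.cast_add, ZMod.natCast_zmod_val]
    rcases lt_or_ge a.val n with h | h
    · have := (chord_inj hpq hq (Nat.lt_add_of_pos_right (Nat.pos_of_neZero n)) (by omega)).1 ha'
      omega
    · obtain ⟨b, hb⟩ := Nat.exists_eq_add_of_le' h
      rw [hb, add_assoc, ← two_mul, chord_comm _ (b + n), chord_add_self] at ha'
      have := (chord_inj hpq hq (by omega) (by omega)).1 ha'
      omega
  · rintro rfl
    exact ⟨p, by rw [chord, Nat.cast_add]⟩

/-- The diameter from the vertex `a` of the `2n`-gon. -/
def diameter (a : Fin n) : Finset (ZMod (2 * n)) := chord (2 * n) a (a + n)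

namespace Arc

/-- The diagonal of the `2n`-gon spanned by an arc of the `n`-cycle, whose vertices are those of the
`2n`-gon up to central symmetry: the lift of the arc starting in `[0, n)`. -/
def diagonal (w : Arc n) : Finset (ZMod (2 * n)) := chord (2 * n) w.1.1 (w.1.1 + w.len)

/-- The centrally symmetric pair of diagonals labelled by an arc. -/
def diagonals (w : Arc n) : Finset (Finset (ZMod (2 * n))) := {w.diagonal, centralSym n w.diagonal}

theorem two_le_len (w : Arc n) : 2 ≤ w.len := w.2

theorem len_lt (w : Arc n) : w.len < n := Fin.is_lt _

theorem val_snd (w : Arc n) :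
    w.1.2.val = if w.1.1.val + w.len < n then w.1.1.val + w.len else w.1.1.val + w.len - n := by
  rw [len, cycDist_eq_ite]
  split_ifs <;> omega

theorem ext_of_len {w v : Arc n} (hfst : w.1.1.val = v.1.1.val) (hlen : w.len = v.len) :
    w = v := by
  refine Subtype.ext (Prod.ext (Fin.ext hfst) (Fin.ext ?_))
  rw [val_snd, val_snd, hfst, hlen]

theorem exists_fst_len {a k : ℕ} (ha : a < n) (hk : 2 ≤ k) (hkn : k < n) :
    ∃ w : Arc n, w.1.1.val = a ∧ w.len = k := by
  let b : Fin n := ⟨if a + k < n then a + k else a + k - n, by split_ifs <;> omega⟩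
  have hlen : cycDist ⟨a, ha⟩ b = k := by
    rw [cycDist_eq_ite]
    dsimp only [b]
    split_ifs <;> omega
  exact ⟨⟨(⟨a, ha⟩, b), hlen.symm ▸ hk⟩, rfl, hlen⟩

theorem exists_centralSym_diagonal_eq (w : Arc n) : ∃ p q, p < q ∧ q < 2 * n ∧
    centralSym n w.diagonal = chord (2 * n) p q ∧
      (w.1.1 + w.len < n ∧ p = w.1.1 + n ∧ q = w.1.1 + w.len + n ∨
        n ≤ w.1.1 + w.len ∧ p + n = w.1.1 + w.len ∧ q = w.1.1 + n) := by
  have hlen := w.two_le_len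
  have hlen' := w.len_lt
  rcases lt_or_ge (w.1.1 + w.len) n with h | h
  · exact ⟨w.1.1 + n, w.1.1 + w.len + n, by omega, by omega, centralSym_chord .., by omega⟩
  · obtain ⟨p, hp⟩ := Nat.exists_eq_add_of_le' h
    refine ⟨p, w.1.1 + n, by omega, by omega, ?_, by omega⟩
    rw [diagonal, hp, chord_comm, centralSym_chord_add]

theorem isDiag_diagonal (w : Arc n) : IsDiag (2 * n) w.diagonal := by
  have hlen := w.two_le_len
  have hlen' := w.len_lt
  exact (isDiag_chord_iff (by omega) (by omega)).2 (by omega)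

theorem not_isDiameter_diagonal (w : Arc n) : ¬ IsDiameter n w.diagonal := by
  have hlen := w.two_le_len
  have hlen' := w.len_lt
  rw [diagonal, isDiameter_chord_iff (by omega) (by omega)]
  omega

theorem diagonals_injective : Function.Injective (diagonals (n := n)) := by
  intro w v h
  have hw := w.two_le_len
  have hw' := w.len_lt
  have hv := v.two_le_len
  have hv' := v.len_lt
  obtain ⟨p, q, hpq, hq, hsym, hor⟩ := v.exists_centralSym_diagonal_eq
  have hmem : w.diagonal = v.diagonal ∨ w.diagonal = chord (2 * n) p q := by
    have : w.diagonal ∈ v.diagonals := h ▸ Finset.mem_insert_self _ _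
    simpa only [diagonals, Finset.mem_insert, Finset.mem_singleton, hsym] using this
  simp only [diagonal] at hmem
  rw [chord_inj (by omega) (by omega) (by omega) (by omega),
    chord_inj (by omega) (by omega) hpq hq] at hmem
  exact ext_of_len (by omega) (by omega)

end Arc

theorem exists_diameter_eq {e : Finset (ZMod (2 * n))} (he : IsDiag (2 * n) e)
    (hdiam : IsDiameter n e) (hn : 2 ≤ n) : ∃ a : Fin n, diameter a = e := by
  have : NeZero n := ⟨by omega⟩
  obtain ⟨p, q, hpq, hq, rfl⟩ := he.exists_chord
  obtain rfl := (isDiameter_chord_iff hpq hq).1 hdiam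
  exact ⟨⟨p, by omega⟩, rfl⟩

theorem exists_diagonal_eq {e : Finset (ZMod (2 * n))} (he : IsDiag (2 * n) e)
    (hdiam : ¬ IsDiameter n e) (hn : 2 ≤ n) :
    ∃ w : Arc n, e = w.diagonal ∨ e = centralSym n w.diagonal := by
  have : NeZero n := ⟨by omega⟩
  obtain ⟨p, q, hpq, hq, rfl⟩ := he.exists_chord
  rw [isDiag_chord_iff hpq hq] at he
  rw [isDiameter_chord_iff hpq hq] at hdiam
  rcases lt_or_ge p n with hp | hp
  · rcases lt_or_ge q (p + n) with hqn | hqn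
    · obtain ⟨w, hfst, hlen⟩ := Arc.exists_fst_len hp (k := q - p) (by omega) (by omega)
      exact ⟨w, Or.inl (by rw [Arc.diagonal, hfst, hlen, Nat.add_sub_cancel' hpq.le])⟩
    · obtain ⟨a, rfl⟩ := Nat.exists_eq_add_of_le' (show n ≤ q by omega)
      obtain ⟨w, hfst, hlen⟩ := Arc.exists_fst_len (n := n) (a := a) (k := p + n - a)
        (by omega) (by omega) (by omega)
      refine ⟨w, Or.inr ?_⟩
      rw [Arc.diagonal, hfst, hlen, Nat.add_sub_cancel' (by omega),
        chord_comm _ a, centralSym_chord_add, chord_comm]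
  · obtain ⟨a, rfl⟩ := Nat.exists_eq_add_of_le' hp
    obtain ⟨w, hfst, hlen⟩ := Arc.exists_fst_len (n := n) (a := a) (k := q - (a + n))
      (by omega) (by omega) (by omega)
    refine ⟨w, Or.inr ?_⟩
    rw [Arc.diagonal, hfst, hlen, centralSym_chord, show a + (q - (a + n)) + n = q by omega]

theorem natCast_add_natCast_self (n : ℕ) : (n + n : ZMod (2 * n)) = 0 := by
  rw [← Nat.cast_add, ← two_mul, ZMod.natCast_self]

theorem centralSym_centralSym (e : Finset (ZMod (2 * n))) :
    centralSym n (centralSym n e) = e := by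
  simp only [centralSym, Finset.image_image, Function.comp_def, add_assoc,
    natCast_add_natCast_self, add_zero, Finset.image_id']

theorem Crosses.centralSym {e f : Finset (ZMod (2 * n))} (h : Crosses (2 * n) e f) :
    Crosses (2 * n) (centralSym n e) (centralSym n f) := by
  obtain ⟨a, b, c, d, rfl, rfl, hacb, hbda⟩ := h
  refine ⟨a + n, b + n, c + n, d + n, ?_, ?_, ?_, ?_⟩
  · simp only [GalD.centralSym, Finset.image_insert, Finset.image_singleton]
  · simp only [GalD.centralSym, Finset.image_insert, Finset.image_singleton]
  · simpa only [StrictBtw, add_sub_add_right_eq_sub] using hacb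
  · simpa only [StrictBtw, add_sub_add_right_eq_sub] using hbda

theorem crosses_centralSym_left_iff {e f : Finset (ZMod (2 * n))} :
    Crosses (2 * n) (centralSym n e) f ↔ Crosses (2 * n) e (centralSym n f) :=
  ⟨fun h => centralSym_centralSym e ▸ h.centralSym,
    fun h => centralSym_centralSym f ▸ h.centralSym⟩

theorem forall_mem_diagonals_not_crosses_diameter_iff (a : Fin n) (w : Arc n) :
    (∀ f ∈ w.diagonals, ¬ Crosses (2 * n) (diameter a) f) ↔ ¬ w.Inside a := by
  have hlen := w.two_le_len
  have hlen' := w.len_lt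
  obtain ⟨p, q, hpq, hq, hsym, hor⟩ := w.exists_centralSym_diagonal_eq
  simp only [Arc.diagonals, Finset.mem_insert, Finset.mem_singleton, forall_eq_or_imp, forall_eq]
  rw [hsym, diameter, Arc.diagonal, crosses_chord_iff (by omega) (by omega) (by omega) (by omega),
    crosses_chord_iff (by omega) (by omega) hpq hq, Arc.Inside, cycDist_eq_ite]
  split_ifs <;> omega

theorem forall_mem_diagonals_not_crosses_iff_of_len_le {w v : Arc n} (h : v.len ≤ w.len) :
    (∀ e ∈ w.diagonals, ∀ f ∈ v.diagonals, ¬ Crosses (2 * n) e f) ↔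
      ¬ v.Inside w.1.1 ∧ ¬ v.Inside w.1.2 := by
  have hw := w.two_le_len
  have hw' := w.len_lt
  have hv := v.two_le_len
  have hv' := v.len_lt
  have hsnd := w.val_snd
  obtain ⟨p, q, hpq, hq, hsym, hor⟩ := v.exists_centralSym_diagonal_eq
  simp only [Arc.diagonals, Finset.mem_insert, Finset.mem_singleton, forall_eq_or_imp, forall_eq,
    crosses_centralSym_left_iff, centralSym_centralSym]
  rw [and_comm (a := ¬ Crosses _ _ (centralSym n v.diagonal)), and_self,
    hsym, Arc.diagonal, Arc.diagonal,
    crosses_chord_iff (by omega) (by omega) (by omega) (by omega),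
    crosses_chord_iff (by omega) (by omega) hpq hq,
    Arc.Inside, Arc.Inside, cycDist_eq_ite, cycDist_eq_ite]
  generalize w.len = k at *
  generalize v.len = m at *
  split_ifs at * <;> omega

theorem diameter_injective : Function.Injective (diameter (n := n)) := fun a b h =>
  Fin.ext ((chord_inj (by omega) (by omega) (by omega) (by omega)).1 h).1

theorem isDiameter_diameter (a : Fin n) : IsDiameter n (diameter a) :=
  (isDiameter_chord_iff (by omega) (by omega)).2 rfl

theorem isDiag_diameter (hn : 2 ≤ n) (a : Fin n) : IsDiag (2 * n) (diameter a) :=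
  (isDiag_chord_iff (by omega) (by omega)).2 (by omega)

namespace FacetLabel

/-- The element of the type `D_n` model labelling a facet of the associahedron. -/
def toDElem : FacetLabel n → DElem n
  | red a => .red (diameter a)
  | blue b => .blue (diameter b)
  | arc w => .pair w.diagonals

theorem memM_toDElem (hn : 2 ≤ n) : ∀ x : FacetLabel n, memM n x.toDElem
  | red a => ⟨isDiag_diameter hn a, isDiameter_diameter a⟩
  | blue b => ⟨isDiag_diameter hn b, isDiameter_diameter b⟩
  | arc w => ⟨w.diagonal, w.isDiag_diagonal, w.not_isDiameter_diagonal, rfl⟩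

theorem toDElem_injective : Function.Injective (toDElem (n := n)) := by
  rintro (a | b | w) (a' | b' | w') h <;> simp only [toDElem, DElem.red.injEq, DElem.blue.injEq,
    DElem.pair.injEq, reduceCtorEq] at h
  · rw [diameter_injective h]
  · rw [diameter_injective h]
  · rw [Arc.diagonals_injective h]

theorem exists_toDElem_eq (hn : 2 ≤ n) : ∀ {x : DElem n}, memM n x → ∃ y, toDElem y = x
  | .red _, ⟨hdiag, hdiam⟩ =>
    let ⟨a, ha⟩ := exists_diameter_eq hdiag hdiam hn
    ⟨red a, congrArg DElem.red ha⟩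
  | .blue _, ⟨hdiag, hdiam⟩ =>
    let ⟨b, hb⟩ := exists_diameter_eq hdiag hdiam hn
    ⟨blue b, congrArg DElem.blue hb⟩
  | .pair _, ⟨e, hdiag, hdiam, hs⟩ => by
    obtain ⟨w, rfl | rfl⟩ := exists_diagonal_eq hdiag hdiam hn
    · exact ⟨arc w, congrArg DElem.pair hs.symm⟩
    · rw [centralSym_centralSym, Finset.pair_comm] at hs
      exact ⟨arc w, congrArg DElem.pair hs.symm⟩

/-- The bijection between the labels of the facets and the type `D_n` model. -/
noncomputable def equivMSet (hn : 2 ≤ n) : FacetLabel n ≃ MSet n :=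
  Equiv.ofBijective (fun x => ⟨x.toDElem, x.memM_toDElem hn⟩)
    ⟨fun _ _ h => toDElem_injective (congrArg Subtype.val h),
      fun x => (exists_toDElem_eq hn x.2).imp fun _ => Subtype.ext⟩

end FacetLabel

theorem separated_univ_iff {a b : Fin n} : Separated Finset.univ a b ↔ a ≠ b := by
  rw [Separated, ne_comm, ne_eq, ← cycDist_eq_zero_iff]
  constructor
  · rintro (h | ⟨⟨_, hw⟩, -, rfl⟩)
    · omega
    · exact (two_pos.trans_le hw).ne'
  · exact fun h => or_iff_not_imp_left.2 fun h₁ =>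
      ⟨⟨(a, b), by dsimp only; omega⟩, Finset.mem_univ _, rfl⟩

theorem dCompat_comm [NeZero n] {x y : DElem n} : DCompat n x y ↔ DCompat n y x := by
  rcases x with s | e | e <;> rcases y with t | f | f <;> simp only [DCompat, eq_comm]
  exact ⟨fun h f hf e he hfe => h e he f hf (Crosses.symm hfe),
    fun h e he f hf hef => h f hf e he (Crosses.symm hef)⟩

theorem compatGraph_univ_adj_iff [NeZero n] {x y : FacetLabel n} (hxy : x ≠ y) :
    (compatGraph Finset.univ).Adj x y ↔ DCompat n x.toDElem y.toDElem := by
  have hcoloured : ∀ a b : Fin n, (compatGraph Finset.univ).Adj (.red a) (.blue b) ↔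
      diameter a = diameter b := fun a b => by
    rw [compatGraph_adj_red_blue, separated_univ_iff, not_ne_iff, diameter_injective.eq_iff]
  have harcs : ∀ w v : Arc n, w ≠ v → v.len ≤ w.len →
      ((compatGraph Finset.univ).Adj (.arc w) (.arc v) ↔
        DCompat n (.pair w.diagonals) (.pair v.diagonals)) := fun w v hne hlen =>
    (compatGraph_adj_arc_arc_of_len_le hne hlen).trans
      (forall_mem_diagonals_not_crosses_iff_of_len_le hlen).symm
  rcases x with a | b | w <;> rcases y with a' | b' | v <;>
    simp only [FacetLabel.toDElem]
  case red.blue => exact hcoloured a b'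
  case blue.red => exact (SimpleGraph.adj_comm ..).trans ((hcoloured a' b).trans eq_comm)
  case arc.arc =>
    have hne : w ≠ v := fun h => hxy (congrArg FacetLabel.arc h)
    rcases le_total v.len w.len with hlen | hlen
    · exact harcs w v hne hlen
    · exact (SimpleGraph.adj_comm ..).trans ((harcs v w hne.symm hlen).trans dCompat_comm)
  case red.red | blue.blue => simpa [compatGraph, HalfCompat, DCompat] using hxy
  all_goals
    simp [compatGraph, HalfCompat, DCompat, forall_mem_diagonals_not_crosses_diameter_iff]

end Model

theorem RealizesD.exists_isFlagRealization {n d : ℕ} (hn : 2 ≤ n) {P : Set (Fin d → ℝ)}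
    (hP : RealizesD n P) : ∃ S : IneqSystem (Fin d → ℝ) (FacetLabel n), S.polyhedron = P ∧
      S.IsFlagRealization (availableLabels Finset.univ) (compatGraph Finset.univ) := by
  have : NeZero n := ⟨by omega⟩
  obtain ⟨φ, hpoly, hflag, hdim, hfacet, hinj, hsurj, hcompat⟩ := hP
  let e := FacetLabel.equivMSet hn
  have hrange : Set.range (φ ∘ e) = {F | IsFacetOf F P} := by
    rw [e.surjective.range_comp]
    exact Set.Subset.antisymm (Set.range_subset_iff.2 hfacet) hsurj
  have hadj : ∀ x y : FacetLabel n, x ≠ y →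
      ((compatGraph Finset.univ).Adj x y ↔ ((φ ∘ e) x ∩ (φ ∘ e) y).Nonempty) := fun x y hxy =>
    (compatGraph_univ_adj_iff hxy).trans (hcompat _ _ (e.injective.ne hxy)).symm
  obtain ⟨S, hS⟩ :=
    IneqSystem.IsFacetDescription.exists_of_isPolytope hpoly (hinj.comp e.injective) hrange
  refine ⟨S, hS.polyhedron_eq, ?_⟩
  rw [availableLabels_univ]
  exact hS.isFlagRealization hflag (nonempty_of_polyDim_pos (by omega)) hadj

/-- generalized associahedra of type `D_n` lie in `𝒫^cube`: they can be
obtained from the cube `[0,1]^n` by successively shaving off faces of codimension 2. -/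
theorem typeD_in_Pcube (n d : ℕ) (hn : 2 ≤ n) (P : Set (Fin d → ℝ))
    (hP : RealizesD n P) :
    ∃ (m : ℕ) (Q : Fin (m + 1) → Set (Fin n → ℝ)),
      Q 0 = Set.Icc (0 : Fin n → ℝ) 1 ∧
      (∀ i : Fin m, ObtainedByShaving (Q i.castSucc) (Q i.succ)) ∧
      CombEquiv (Q (Fin.last m)) P := by
  have : NeZero n := ⟨by omega⟩
  obtain ⟨T, rfl, hT⟩ := hP.exists_isFlagRealization hn
  obtain ⟨q, S, hhead, hlast, hS⟩ :=
    exists_shaving_relSeries hn (C := Finset.univ) fun _ _ v _ => Finset.mem_univ v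
  have hcomb : CombEquiv q.last T.polyhedron := hlast ▸ hS.combEquiv hT
  exact ⟨q.length, q, hhead, q.step, hcomb⟩

end GalD
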